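/- arXiv:2103.00253 — 3 statements merged into one kernel-verified Lean document; each statement's English description precedes it below -/
import Mathlib

section
/- Let R be a commutative Noetherian local ring and let M be a nonzero finitely generated R-module with finite injective dimension. Then the projective dimension of M equals the Gorenstein dimension of M (as elements of ℕ ∪ {∞}); in particular, pd_R(M) is finite if and only if Gdim_R(M) is finite. -/
open CategoryTheory Pointwise

universe u

variable (R : Type u) [CommRing R]

/-- `Ext^n_R(X, Y) = 0`. -/
def ExtVanish (X Y : Type u) [AddCommGroup X] [Module R X]
    [AddCommGroup Y] [Module R Y] (n : ℕ) : Prop :=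
  Subsingleton (((Ext R (ModuleCat.{u} R) n).obj
    (Opposite.op (ModuleCat.of R X))).obj (ModuleCat.of R Y))

/-- A finitely generated module `X` is totally reflexive if the evaluation map to the
double dual is bijective and `Ext^i(X, R) = 0 = Ext^i(X^*, R)` for all `i ≥ 1`. -/
def IsTotallyReflexive (X : Type u) [AddCommGroup X] [Module R X] : Prop :=
  Module.Finite R X ∧
  Function.Bijective (Module.Dual.eval R X) ∧
  (∀ i : ℕ, 1 ≤ i → ExtVanish R X R i) ∧
  (∀ i : ℕ, 1 ≤ i → ExtVanish R (Module.Dual R X) R i)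

/-- `0 → A → B → C → 0` is a short exact sequence. -/
def IsShortExact {A B C : Type u} [AddCommGroup A] [Module R A] [AddCommGroup B] [Module R B]
    [AddCommGroup C] [Module R C] (f : A →ₗ[R] B) (g : B →ₗ[R] C) : Prop :=
  Function.Injective f ∧ Function.Surjective g ∧ Function.Exact f g

/-- Gorenstein dimension at most `n`: there is a resolution of length `≤ n`
by totally reflexive modules. -/
def GdimLE : ℕ → ModuleCat.{u} R → Prop
  | 0, M => IsTotallyReflexive R M
  | n + 1, M => ∃ (X K : ModuleCat.{u} R) (f : K →ₗ[R] X) (g : X →ₗ[R] M),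
      IsTotallyReflexive R X ∧ IsShortExact R f g ∧ GdimLE n K

/-- Projective dimension at most `n`. -/
def PdimLE : ℕ → ModuleCat.{u} R → Prop
  | 0, M => Module.Finite R M ∧ Module.Projective R M
  | n + 1, M => ∃ (X K : ModuleCat.{u} R) (f : K →ₗ[R] X) (g : X →ₗ[R] M),
      Module.Finite R X ∧ Module.Projective R X ∧ IsShortExact R f g ∧ PdimLE n K

/-- Injective dimension at most `n`. -/
def InjdimLE : ℕ → ModuleCat.{u} R → Prop
  | 0, M => Module.Injective R M
  | n + 1, M => ∃ (I C : ModuleCat.{u} R) (f : M →ₗ[R] I) (g : I →ₗ[R] C),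
      Module.Injective R I ∧ IsShortExact R f g ∧ InjdimLE n C

/-- The Gorenstein dimension, as an element of `ℕ∞`. -/
noncomputable def Gdim (M : ModuleCat.{u} R) : ℕ∞ :=
  sInf {n : ℕ∞ | ∃ m : ℕ, n = (m : ℕ∞) ∧ GdimLE R m M}

/-- The projective dimension, as an element of `ℕ∞`. -/
noncomputable def Pdim (M : ModuleCat.{u} R) : ℕ∞ :=
  sInf {n : ℕ∞ | ∃ m : ℕ, n = (m : ℕ∞) ∧ PdimLE R m M}

/-- A local ring is Gorenstein if it has finite injective dimension over itself. -/
def IsGorensteinRing : Prop :=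
  ∃ n : ℕ, InjdimLE R n (ModuleCat.of R R)

/-- `IsSyzygy R n S K` : `S` is an `n`-th syzygy of `K`, i.e. there is an exact sequence
`0 → S → F_{n-1} → ⋯ → F_0 → K → 0` with each `F_j` finitely generated free. -/
def IsSyzygy : ℕ → ModuleCat.{u} R → ModuleCat.{u} R → Prop
  | 0, S, K => Nonempty (S ≃ₗ[R] K)
  | n + 1, S, K => ∃ (W F : ModuleCat.{u} R) (f : W →ₗ[R] F) (g : F →ₗ[R] K),
      Module.Free R F ∧ Module.Finite R F ∧ IsShortExact R f g ∧ IsSyzygy n S W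

/-- One step in a reducing sequence: a short exact sequence
`0 → K^{⊕a} → L → (Ω^n K)^{⊕b} → 0`. -/
def ReducingStep (K L : ModuleCat.{u} R) (a b n : ℕ) : Prop :=
  ∃ (W : ModuleCat.{u} R) (f : (Fin a → K) →ₗ[R] L) (g : L →ₗ[R] (Fin b → W)),
    IsSyzygy R n W K ∧ IsShortExact R f g

/-- `M` admits a reducing sequence `K_0 = M, K_1, …, K_r` relative to the property `P`,
that is, short exact sequences `0 → K_{i-1}^{⊕a_i} → K_i → (Ω^{n_i}K_{i-1})^{⊕b_i} → 0`
with `a_i, b_i, n_i ≥ 1` and `P (K_r)`. -/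
def HasReducingSeq (P : ModuleCat.{u} R → Prop) (M : ModuleCat.{u} R) (r : ℕ) : Prop :=
  ∃ (K : Fin (r + 1) → ModuleCat.{u} R) (a b n : Fin r → ℕ),
    K 0 = M ∧ (∀ i, Module.Finite R (K i)) ∧
    (∀ i : Fin r, 1 ≤ a i ∧ 1 ≤ b i ∧ 1 ≤ n i ∧
      ReducingStep R (K i.castSucc) (K i.succ) (a i) (b i) (n i)) ∧
    P (K (Fin.last r))

/-- The reducing invariant attached to the finiteness property `P`. -/
noncomputable def ReducingDim (P : ModuleCat.{u} R → Prop) (M : ModuleCat.{u} R) : ℕ∞ :=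
  sInf {n : ℕ∞ | ∃ r : ℕ, n = (r : ℕ∞) ∧ HasReducingSeq R P M r}

/-- The reducing Gorenstein dimension. -/
noncomputable def rGdim (M : ModuleCat.{u} R) : ℕ∞ :=
  ReducingDim R (fun N => ∃ m : ℕ, GdimLE R m N) M

/-- The reducing projective dimension. -/
noncomputable def rPdim (M : ModuleCat.{u} R) : ℕ∞ :=
  ReducingDim R (fun N => ∃ m : ℕ, PdimLE R m N) M

/-- depth of a module over a local ring: `inf { i | Ext^i(k, M) ≠ 0 }`. -/
noncomputable def depth [IsLocalRing R] (M : ModuleCat.{u} R) : ℕ∞ :=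
  sInf {n : ℕ∞ | ∃ i : ℕ, n = (i : ℕ∞) ∧
    ¬ ExtVanish R (R ⧸ IsLocalRing.maximalIdeal R) M i}

/-- maximal Cohen-Macaulay: depth equals the Krull dimension of the ring. -/
def IsMCM [IsLocalRing R] (M : ModuleCat.{u} R) : Prop :=
  (depth R M : WithBot ℕ∞) = ringKrullDim R

/-- torsion-free: every non zero-divisor of `R` is a non zero-divisor on `M`. -/
def IsTorsionFreeModule (M : Type u) [AddCommGroup M] [Module R M] : Prop :=
  ∀ r ∈ nonZeroDivisors R, ∀ m : M, r • m = 0 → m = 0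

section Aux

variable {R}

/-- `Ext^n(X, Y) = 0`, stated with the `Ext` groups of the derived category. -/
def EV (R : Type u) [CommRing R] (X Y : Type u) [AddCommGroup X] [Module R X]
    [AddCommGroup Y] [Module R Y] (n : ℕ) : Prop :=
  ∀ x : Abelian.Ext (ModuleCat.of R X) (ModuleCat.of R Y) n, x = 0

theorem extVanish_iff (X Y : Type u) [AddCommGroup X] [Module R X]
    [AddCommGroup Y] [Module R Y] (n : ℕ) (hn : 1 ≤ n) :
    ExtVanish R X Y n ↔ EV R X Y n := by
  obtain ⟨p, rfl⟩ : ∃ p, n = p + 1 := ⟨n - 1, by omega⟩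
  let P := ProjectiveResolution.of (ModuleCat.of R X)
  have h1 : ExtVanish R X Y (p + 1) ↔
      ∀ f : P.complex.X (p + 1) ⟶ ModuleCat.of R Y, P.complex.d (p + 2) (p + 1) ≫ f = 0 →
        ∃ g : P.complex.X p ⟶ ModuleCat.of R Y, P.complex.d (p + 1) p ≫ g = f := by
    unfold ExtVanish
    rw [← ModuleCat.isZero_iff_subsingleton, (P.isoExt (p + 1) (ModuleCat.of R Y)).isZero_iff,
      ← HomologicalComplex.exactAt_iff_isZero_homology,
      HomologicalComplex.exactAt_iff' _ p (p + 1) (p + 2) (by simp) (by simp),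
      ShortComplex.moduleCat_exact_iff]
    rfl
  rw [h1]
  constructor
  · intro h x
    obtain ⟨f, hf, rfl⟩ := P.extMk_surjective x (p + 2) rfl
    rw [P.extMk_eq_zero_iff f (p + 2) rfl hf p rfl]
    exact h f hf
  · intro h f hf
    exact (P.extMk_eq_zero_iff f (p + 2) rfl hf p rfl).1 (h _)

section ses

variable {A B C Y : Type u} [AddCommGroup A] [Module R A] [AddCommGroup B] [Module R B]
    [AddCommGroup C] [Module R C] [AddCommGroup Y] [Module R Y]

/-- The short complex attached to a short exact sequence. -/
abbrev sc {f : A →ₗ[R] B} {g : B →ₗ[R] C} (h : IsShortExact R f g) :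
    ShortComplex (ModuleCat.{u} R) :=
  ShortComplex.mk (ModuleCat.ofHom f) (ModuleCat.ofHom g) (by
    rw [← ModuleCat.ofHom_comp, h.2.2.linearMap_comp_eq_zero]; rfl)

theorem scExact {f : A →ₗ[R] B} {g : B →ₗ[R] C} (h : IsShortExact R f g) :
    (sc h).ShortExact :=
  ModuleCat.shortComplex_shortExact _ h.2.2 h.1 h.2.1

theorem EV.mid {f : A →ₗ[R] B} {g : B →ₗ[R] C} (h : IsShortExact R f g) {n : ℕ}
    (hA : EV R A Y n) (hC : EV R C Y n) : EV R B Y n := by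
  intro x
  obtain ⟨y, rfl⟩ := Abelian.Ext.contravariant_sequence_exact₂ (scExact h) _ x (hA _)
  rw [show y = 0 from hC y, Abelian.Ext.comp_zero]

theorem EV.left {f : A →ₗ[R] B} {g : B →ₗ[R] C} (h : IsShortExact R f g) {n : ℕ}
    (hB : EV R B Y n) (hC : EV R C Y (n + 1)) : EV R A Y n := by
  intro x
  obtain ⟨y, rfl⟩ := Abelian.Ext.contravariant_sequence_exact₁ (scExact h) _ x
    (add_comm 1 n) (hC _)
  rw [show y = 0 from hB y, Abelian.Ext.comp_zero]

theorem EV.right {f : A →ₗ[R] B} {g : B →ₗ[R] C} (h : IsShortExact R f g) {n : ℕ}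
    (hA : EV R A Y n) (hB : EV R B Y (n + 1)) : EV R C Y (n + 1) := by
  intro x
  obtain ⟨y, rfl⟩ := Abelian.Ext.contravariant_sequence_exact₃ (scExact h) _ x (hB _)
    (add_comm 1 n)
  rw [show y = 0 from hA y, Abelian.Ext.comp_zero]

theorem EV.extend {f : A →ₗ[R] B} {g : B →ₗ[R] C} (h : IsShortExact R f g)
    (hC : EV R C Y 1) (φ : A →ₗ[R] Y) : ∃ ψ : B →ₗ[R] Y, ψ ∘ₗ f = φ := by
  obtain ⟨y, hy⟩ := Abelian.Ext.contravariant_sequence_exact₁ (scExact h) (ModuleCat.of R Y)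
    (Abelian.Ext.mk₀ (ModuleCat.ofHom φ)) (add_zero 1) (hC _)
  obtain ⟨ψ, rfl⟩ := Abelian.Ext.homEquiv₀.symm.surjective y
  rw [Abelian.Ext.homEquiv₀_symm_apply, Abelian.Ext.mk₀_comp_mk₀] at hy
  have := Abelian.Ext.homEquiv₀.symm.injective hy
  refine ⟨ψ.hom, ?_⟩
  have h2 := congrArg ModuleCat.Hom.hom this
  simpa using h2

theorem EV.one_of_extend {f : A →ₗ[R] B} {g : B →ₗ[R] C} (h : IsShortExact R f g)
    (hB : EV R B Y 1) (hex : ∀ φ : A →ₗ[R] Y, ∃ ψ : B →ₗ[R] Y, ψ ∘ₗ f = φ) :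
    EV R C Y 1 := by
  intro x
  obtain ⟨y, rfl⟩ := Abelian.Ext.contravariant_sequence_exact₃ (scExact h) _ x (hB _)
    (add_zero 1)
  obtain ⟨φ, rfl⟩ := Abelian.Ext.homEquiv₀.symm.surjective y
  obtain ⟨ψ, hψ⟩ := hex φ.hom
  have : φ = (sc h).f ≫ ModuleCat.ofHom ψ := by
    ext1
    simpa using hψ.symm
  rw [Abelian.Ext.homEquiv₀_symm_apply, this, ← Abelian.Ext.mk₀_comp_mk₀]
  exact (scExact h).extClass_comp_assoc _

theorem EV.of_projective [Module.Projective R A] (n : ℕ) (hn : 1 ≤ n) : EV R A Y n := by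
  obtain ⟨p, rfl⟩ : ∃ p, n = p + 1 := ⟨n - 1, by omega⟩
  intro x
  exact Abelian.Ext.eq_zero_of_projective x

theorem EV.congr (e : A ≃ₗ[R] B) {n : ℕ} (hA : EV R A Y n) : EV R B Y n := by
  intro x
  have h1 : (Abelian.Ext.mk₀ e.toModuleIso.hom).comp x (zero_add n) = 0 := hA _
  rw [← x.mk₀_id_comp, ← e.toModuleIso.inv_hom_id, ← Abelian.Ext.mk₀_comp_mk₀_assoc, h1,
    Abelian.Ext.comp_zero]

end ses

theorem InjdimLE.has {n : ℕ} {M : ModuleCat.{u} R} (h : InjdimLE R n M) :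
    HasInjectiveDimensionLT M (n + 1) := by
  induction n generalizing M with
  | zero =>
    have h : Module.Injective R M := h
    rw [Nat.zero_add, ← injective_iff_hasInjectiveDimensionLT_one]
    exact Module.injective_object_of_injective_module R M
  | succ n ih =>
    obtain ⟨I, C, f, g, hI, hs, hC⟩ := h
    have := ih hC
    have : Injective I := Module.injective_object_of_injective_module R I
    exact ((scExact hs).hasInjectiveDimensionLT_X₃_iff n this).1 (ih hC)

theorem InjdimLE.ev {n : ℕ} {M : Type u} [AddCommGroup M] [Module R M]
    (h : InjdimLE R n (ModuleCat.of R M)) (X : Type u) [AddCommGroup X] [Module R X] (m : ℕ)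
    (hm : n + 1 ≤ m) : EV R X M m := by
  intro x
  have := h.has
  exact x.eq_zero_of_hasInjectiveDimensionLT (n + 1) hm

section tr

variable {A B C D F K X : Type u} [AddCommGroup A] [Module R A] [AddCommGroup B] [Module R B]
    [AddCommGroup C] [Module R C] [AddCommGroup D] [Module R D] [AddCommGroup F] [Module R F]
    [AddCommGroup K] [Module R K] [AddCommGroup X] [Module R X]

theorem tr_iff : IsTotallyReflexive R X ↔ Module.Finite R X ∧ Module.IsReflexive R X ∧
    (∀ i : ℕ, 1 ≤ i → EV R X R i) ∧ (∀ i : ℕ, 1 ≤ i → EV R (Module.Dual R X) R i) := by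
  unfold IsTotallyReflexive
  refine and_congr Iff.rfl (and_congr ⟨fun h => ⟨h⟩, fun h => h.1⟩ (and_congr ?_ ?_))
  · exact forall_congr' fun i => forall_congr' fun hi => extVanish_iff _ _ _ hi
  · exact forall_congr' fun i => forall_congr' fun hi => extVanish_iff _ _ _ hi

theorem finite_dual [IsNoetherianRing R] [Module.Finite R X] :
    Module.Finite R (Module.Dual R X) := by
  obtain ⟨n, p, hp⟩ := Module.Finite.exists_fin' R X
  exact Module.Finite.of_injective p.dualMap (LinearMap.dualMap_injective_of_surjective hp)

/-- Factoring a linear map through a surjection. -/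
theorem factor (g : A →ₗ[R] B) (hg : Function.Surjective g) (φ : A →ₗ[R] C)
    (h : ∀ a, g a = 0 → φ a = 0) : ∃ ψ : B →ₗ[R] C, ∀ a, ψ (g a) = φ a := by
  refine ⟨(LinearMap.ker g).liftQ φ (fun a ha => h a ha) ∘ₗ
    (g.quotKerEquivOfSurjective hg).symm.toLinearMap, fun a => ?_⟩
  have : (g.quotKerEquivOfSurjective hg).symm (g a) = (LinearMap.ker g).mkQ a := by
    rw [LinearEquiv.symm_apply_eq]; rfl
  rw [LinearMap.comp_apply, LinearEquiv.coe_coe, this]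
  rfl

theorem dual_ses {f : A →ₗ[R] B} {g : B →ₗ[R] C} (h : IsShortExact R f g)
    (hC : EV R C R 1) : IsShortExact R g.dualMap f.dualMap := by
  refine ⟨LinearMap.dualMap_injective_of_surjective h.2.1, fun φ => EV.extend h hC φ, ?_⟩
  intro φ
  constructor
  · intro hφ
    obtain ⟨ψ, hψ⟩ := factor g h.2.1 φ (fun b hb => by
      obtain ⟨a, rfl⟩ := (h.2.2 b).1 hb
      exact LinearMap.congr_fun hφ a)
    exact ⟨ψ, LinearMap.ext hψ⟩
  · rintro ⟨ψ, rfl⟩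
    ext a
    simp [h.2.2.apply_apply_eq_zero]

theorem tr_dual [IsNoetherianRing R] (h : IsTotallyReflexive R X) :
    IsTotallyReflexive R (Module.Dual R X) := by
  rw [tr_iff] at *
  obtain ⟨h1, h2, h3, h4⟩ := h
  exact ⟨finite_dual, inferInstance, h4, fun i hi => (h3 i hi).congr (Module.evalEquiv R X)⟩

theorem tr_ext [IsNoetherianRing R] {f : A →ₗ[R] B} {g : B →ₗ[R] C} (h : IsShortExact R f g)
    (hA : IsTotallyReflexive R A) (hC : IsTotallyReflexive R C) : IsTotallyReflexive R B := by
  rw [tr_iff] at *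
  obtain ⟨a1, a2, a3, a4⟩ := hA
  obtain ⟨c1, c2, c3, c4⟩ := hC
  have hd := dual_ses h (c3 1 le_rfl)
  refine ⟨?_, ⟨?_, ?_⟩, fun i hi => EV.mid h (a3 i hi) (c3 i hi),
    fun i hi => EV.mid hd (c4 i hi) (a4 i hi)⟩
  · have e1 : LinearMap.range f = LinearMap.ker g := h.2.2.linearMap_ker_eq.symm
    have : IsNoetherian R A := isNoetherian_of_isNoetherianRing_of_finite R A
    have : IsNoetherian R C := isNoetherian_of_isNoetherianRing_of_finite R C
    have := isNoetherian_of_range_eq_ker f g e1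
    infer_instance
  · rw [injective_iff_map_eq_zero]
    intro b hb
    have hb' : ∀ φ : Module.Dual R B, φ b = 0 := fun φ => LinearMap.congr_fun hb φ
    have : g b = 0 := by
      apply (Module.bijective_dual_eval R C).1
      rw [map_zero]
      ext φ
      exact hb' (φ ∘ₗ g)
    obtain ⟨a, rfl⟩ := (h.2.2 b).1 this
    have : a = 0 := by
      apply (Module.bijective_dual_eval R A).1
      rw [map_zero]
      ext φ
      obtain ⟨ψ, rfl⟩ := hd.2.1 φ
      exact hb' ψ
    rw [this, map_zero]
  · intro ψ
    obtain ⟨c, hc⟩ := (Module.bijective_dual_eval R C).2 (ψ ∘ₗ g.dualMap)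
    obtain ⟨b, rfl⟩ := h.2.1 c
    obtain ⟨χ, hχ⟩ := factor f.dualMap hd.2.1 (ψ - Module.Dual.eval R B b) (fun φ hφ => by
      obtain ⟨θ, rfl⟩ := (hd.2.2 φ).1 hφ
      have := LinearMap.congr_fun hc θ
      simp only [Module.Dual.eval_apply, LinearMap.comp_apply] at this
      simp [LinearMap.sub_apply, ← this])
    obtain ⟨a, rfl⟩ := (Module.bijective_dual_eval R A).2 χ
    refine ⟨b + f a, ?_⟩
    ext φ
    have := hχ φ
    simp only [Module.Dual.eval_apply, LinearMap.sub_apply, LinearMap.dualMap_apply] at this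
    simp [this]

theorem tr_projective [Module.Finite R X] [Module.Projective R X] : IsTotallyReflexive R X := by
  rw [tr_iff]
  exact ⟨inferInstance, inferInstance, fun i hi => EV.of_projective i hi,
    fun i hi => EV.of_projective i hi⟩

theorem tr_ker [IsNoetherianRing R] {f : K →ₗ[R] F} {p : F →ₗ[R] D} (h : IsShortExact R f p)
    [Module.Finite R F] [Module.Projective R F] (hD : IsTotallyReflexive R D) :
    IsTotallyReflexive R K := by
  rw [tr_iff] at *
  obtain ⟨d1, d2, d3, d4⟩ := hD
  have hd := dual_ses h (d3 1 le_rfl)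
  refine ⟨Module.Finite.of_injective f h.1, ⟨?_, ?_⟩,
    fun i hi => EV.left h (EV.of_projective i hi) (d3 (i + 1) (by omega)), ?_⟩
  · rw [injective_iff_map_eq_zero]
    intro k hk
    apply h.1
    apply (Module.bijective_dual_eval R F).1
    rw [map_zero, map_zero]
    ext φ
    exact LinearMap.congr_fun hk (f.dualMap φ)
  · intro ψ
    obtain ⟨v, hv⟩ := (Module.bijective_dual_eval R F).2 (ψ ∘ₗ f.dualMap)
    have hv' : ∀ φ : Module.Dual R F, φ v = ψ (f.dualMap φ) := fun φ => LinearMap.congr_fun hv φ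
    have : p v = 0 := by
      apply (Module.bijective_dual_eval R D).1
      rw [map_zero]
      ext φ
      have h2 := hv' (p.dualMap φ)
      rw [(hd.2.2 (p.dualMap φ)).2 ⟨φ, rfl⟩, map_zero] at h2
      exact h2
    obtain ⟨k, rfl⟩ := (h.2.2 v).1 this
    refine ⟨k, ?_⟩
    ext φ
    obtain ⟨θ, rfl⟩ := hd.2.1 φ
    exact hv' θ
  · intro i hi
    obtain ⟨j, rfl⟩ : ∃ j, i = j + 1 := ⟨i - 1, by omega⟩
    rcases Nat.eq_zero_or_pos j with rfl | hj
    · refine EV.one_of_extend hd (EV.of_projective 1 le_rfl) (fun φ => ?_)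
      obtain ⟨d, rfl⟩ := (Module.bijective_dual_eval R D).2 φ
      obtain ⟨v, rfl⟩ := h.2.1 d
      exact ⟨Module.Dual.eval R F v, rfl⟩
    · exact EV.right hd (d4 j hj) (EV.of_projective _ hi)

theorem tr_embed [IsNoetherianRing R] (h : IsTotallyReflexive R X) :
    ∃ (F A : ModuleCat.{u} R) (f : X →ₗ[R] F) (g : F →ₗ[R] A), Module.Finite R F ∧
      Module.Projective R F ∧ IsTotallyReflexive R A ∧ IsShortExact R f g := by
  have hD := tr_dual h
  have : Module.Finite R (Module.Dual R X) := hD.1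
  have : Module.IsReflexive R X := ⟨h.2.1⟩
  obtain ⟨n, p, hp⟩ := Module.Finite.exists_fin' R (Module.Dual R X)
  have hs : IsShortExact R (LinearMap.ker p).subtype p :=
    ⟨Submodule.injective_subtype _, hp, p.exact_subtype_ker_map⟩
  have hK := tr_ker hs hD
  have hd := dual_ses hs ((tr_iff.1 hD).2.2.1 1 le_rfl)
  refine ⟨ModuleCat.of R (Module.Dual R (Fin n → R)),
    ModuleCat.of R (Module.Dual R (LinearMap.ker p)),
    p.dualMap ∘ₗ (Module.evalEquiv R X).toLinearMap, (LinearMap.ker p).subtype.dualMap,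
    inferInstanceAs (Module.Finite R (Module.Dual R (Fin n → R))),
    inferInstanceAs (Module.Projective R (Module.Dual R (Fin n → R))), tr_dual hK,
    hd.1.comp (Module.evalEquiv R X).injective, hd.2.1, ?_⟩
  intro φ
  refine (hd.2.2 φ).trans ⟨?_, ?_⟩
  · rintro ⟨ψ, rfl⟩
    exact ⟨(Module.evalEquiv R X).symm ψ,
      congrArg p.dualMap ((Module.evalEquiv R X).apply_symm_apply ψ)⟩
  · rintro ⟨x, rfl⟩
    exact ⟨_, rfl⟩

theorem pushout_ses {f : K →ₗ[R] X} {g : X →ₗ[R] C} {i : K →ₗ[R] B} {q : B →ₗ[R] A}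
    (h : IsShortExact R f g) (h' : IsShortExact R i q) :
    ∃ (P : ModuleCat.{u} R) (a : X →ₗ[R] P) (b : P →ₗ[R] A) (c : B →ₗ[R] P) (d : P →ₗ[R] C),
      IsShortExact R a b ∧ IsShortExact R c d := by
  let N : Submodule R (X × B) := LinearMap.range (f.prod (-i))
  have hN : ∀ x b, (x, b) ∈ N ↔ ∃ k, f k = x ∧ -i k = b := by
    intro x b
    simp [N, LinearMap.mem_range, Prod.ext_iff]
  have hz : ∀ x b, N.mkQ (x, b) = 0 ↔ ∃ k, f k = x ∧ -i k = b := by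
    intro x b
    rw [← hN]; simp
  obtain ⟨b, hb⟩ := factor N.mkQ N.mkQ_surjective (q ∘ₗ LinearMap.snd R X B) (by
    rintro ⟨x, y⟩ hxy
    obtain ⟨k, -, rfl⟩ := (hz x y).1 hxy
    simp [h'.2.2.apply_apply_eq_zero])
  obtain ⟨d, hd⟩ := factor N.mkQ N.mkQ_surjective (g ∘ₗ LinearMap.fst R X B) (by
    rintro ⟨x, y⟩ hxy
    obtain ⟨k, rfl, -⟩ := (hz x y).1 hxy
    simp [h.2.2.apply_apply_eq_zero])
  refine ⟨ModuleCat.of R ((X × B) ⧸ N), N.mkQ ∘ₗ LinearMap.inl R X B, b,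
    N.mkQ ∘ₗ LinearMap.inr R X B, d, ⟨?_, ?_, ?_⟩, ⟨?_, ?_, ?_⟩⟩
  · rw [injective_iff_map_eq_zero]
    intro x hx
    obtain ⟨k, rfl, h2⟩ := (hz x 0).1 hx
    rw [h'.1 (show i k = i 0 by simpa using h2), map_zero]
  · intro a
    obtain ⟨y, rfl⟩ := h'.2.1 a
    exact ⟨N.mkQ (0, y), hb _⟩
  · intro z
    obtain ⟨⟨x, y⟩, rfl⟩ := N.mkQ_surjective z
    rw [hb]
    constructor
    · intro hy
      obtain ⟨k, rfl⟩ := (h'.2.2 y).1 hy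
      refine ⟨x + f k, ?_⟩
      rw [LinearMap.comp_apply, ← sub_eq_zero, ← map_sub]
      exact (hz _ _).2 ⟨k, by simp, by simp⟩
    · rintro ⟨x', hx'⟩
      rw [← hb, ← hx', LinearMap.comp_apply, hb]
      simp
  · rw [injective_iff_map_eq_zero]
    intro x hx
    obtain ⟨k, h2, rfl⟩ := (hz 0 x).1 hx
    rw [h.1 (show f k = f 0 by simpa using h2), map_zero, neg_zero]
  · intro a
    obtain ⟨y, rfl⟩ := h.2.1 a
    exact ⟨N.mkQ (y, 0), hd _⟩
  · intro z
    obtain ⟨⟨x, y⟩, rfl⟩ := N.mkQ_surjective z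
    rw [hd]
    constructor
    · intro hy
      obtain ⟨k, rfl⟩ := (h.2.2 x).1 hy
      refine ⟨y + i k, ?_⟩
      rw [LinearMap.comp_apply, ← sub_eq_zero, ← map_sub]
      exact (hz _ _).2 ⟨-k, by simp, by simp⟩
    · rintro ⟨x', hx'⟩
      rw [← hd, ← hx', LinearMap.comp_apply, hd]
      simp

theorem comp_ses {c : B →ₗ[R] X} {d : X →ₗ[R] C} {j : X →ₗ[R] F} {q : F →ₗ[R] A}
    (h : IsShortExact R c d) (h' : IsShortExact R j q) :
    ∃ (H : ModuleCat.{u} R) (r : F →ₗ[R] H) (s : C →ₗ[R] H) (t : H →ₗ[R] A),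
      IsShortExact R (j ∘ₗ c) r ∧ IsShortExact R s t := by
  let N : Submodule R F := LinearMap.range (j ∘ₗ c)
  have hz : ∀ x, N.mkQ x = 0 ↔ ∃ b, j (c b) = x := by
    intro x
    simp [N]
  obtain ⟨s, hs⟩ := factor d h.2.1 (N.mkQ ∘ₗ j) (by
    intro x hx
    obtain ⟨b, rfl⟩ := (h.2.2 x).1 hx
    exact (hz _).2 ⟨b, rfl⟩)
  obtain ⟨t, ht⟩ := factor N.mkQ N.mkQ_surjective q (by
    intro x hx
    obtain ⟨b, rfl⟩ := (hz x).1 hx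
    exact h'.2.2.apply_apply_eq_zero _)
  refine ⟨ModuleCat.of R (F ⧸ N), N.mkQ, s, t, ⟨h'.1.comp h.1, N.mkQ_surjective, ?_⟩,
    ?_, ?_, ?_⟩
  · intro x
    exact hz x
  · rw [injective_iff_map_eq_zero]
    intro x hx
    obtain ⟨y, rfl⟩ := h.2.1 x
    rw [hs] at hx
    obtain ⟨b, hb⟩ := (hz _).1 hx
    rw [← h'.1 hb]
    exact h.2.2.apply_apply_eq_zero _
  · intro a
    obtain ⟨y, rfl⟩ := h'.2.1 a
    exact ⟨N.mkQ y, ht _⟩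
  · intro z
    obtain ⟨y, rfl⟩ := N.mkQ_surjective z
    rw [ht]
    constructor
    · intro hy
      obtain ⟨x, rfl⟩ := (h'.2.2 y).1 hy
      exact ⟨d x, hs x⟩
    · rintro ⟨x, hx⟩
      obtain ⟨x, rfl⟩ := h.2.1 x
      rw [hs] at hx
      rw [← ht, ← hx, LinearMap.comp_apply, ht]
      exact h'.2.2.apply_apply_eq_zero _

end tr

theorem gdim_embed [IsNoetherianRing R] {n : ℕ} {M : ModuleCat.{u} R} (h : GdimLE R n M) :
    ∃ (H A : ModuleCat.{u} R) (f : M →ₗ[R] H) (g : H →ₗ[R] A),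
      HasProjectiveDimensionLT H (n + 1) ∧ IsTotallyReflexive R A ∧ IsShortExact R f g := by
  induction n generalizing M with
  | zero =>
    obtain ⟨F, A, f, g, -, h2, h3, h4⟩ := tr_embed (X := M) h
    exact ⟨F, A, f, g, inferInstance, h3, h4⟩
  | succ n ih =>
    obtain ⟨X, K, f, g, hX, hs, hK⟩ := h
    obtain ⟨H', A', i, q, hH', hA', hs'⟩ := ih hK
    obtain ⟨P, a, b, c, d, hab, hcd⟩ := pushout_ses hs hs'
    have hP : IsTotallyReflexive R P := tr_ext hab hX hA'
    obtain ⟨F, A, j, p, -, h2, h3, h4⟩ := tr_embed hP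
    obtain ⟨H, r, s, t, h5, h6⟩ := comp_ses hcd h4
    have : HasProjectiveDimensionLT F (n + 1 + 1) :=
      hasProjectiveDimensionLT_of_ge F 1 (n + 1 + 1) (by omega)
    refine ⟨H, A, s, t, ?_, h3, h6⟩
    exact (scExact h5).hasProjectiveDimensionLT_X₃ (n + 1) hH' this

theorem pdimLE_of_has [IsNoetherianRing R] {n : ℕ} {M : ModuleCat.{u} R} [Module.Finite R M]
    (h : HasProjectiveDimensionLT M (n + 1)) : PdimLE R n M := by
  induction n generalizing M with
  | zero =>
    have : Projective M := projective_iff_hasProjectiveDimensionLT_one.2 h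
    have : Module.Projective R M := (IsProjective.iff_projective (R := R) M).2 this
    exact ⟨inferInstance, this⟩
  | succ n ih =>
    obtain ⟨m, p, hp⟩ := Module.Finite.exists_fin' R M
    have hs : IsShortExact R (LinearMap.ker p).subtype p :=
      ⟨Submodule.injective_subtype _, hp, p.exact_subtype_ker_map⟩
    have hF : Projective (ModuleCat.of R (Fin m → R)) := inferInstance
    have hK := ((scExact hs).hasProjectiveDimensionLT_X₃_iff n hF).1 h
    refine ⟨ModuleCat.of R (Fin m → R), ModuleCat.of R (LinearMap.ker p),
      (LinearMap.ker p).subtype, p, inferInstanceAs (Module.Finite R (Fin m → R)),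
      inferInstanceAs (Module.Projective R (Fin m → R)), hs, ?_⟩
    have : Module.Finite R (ModuleCat.of R (LinearMap.ker p)) :=
      inferInstanceAs (Module.Finite R (LinearMap.ker p))
    exact ih hK

theorem gdimLE_of_pdimLE {n : ℕ} {M : ModuleCat.{u} R} (h : PdimLE R n M) : GdimLE R n M := by
  induction n generalizing M with
  | zero =>
    obtain ⟨h1, h2⟩ := h
    exact tr_projective (R := R) (X := M)
  | succ n ih =>
    obtain ⟨X, K, f, g, h1, h2, hs, hK⟩ := h
    exact ⟨X, K, f, g, tr_projective, hs, ih hK⟩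

theorem tr_ev [IsNoetherianRing R] {M : Type u} [AddCommGroup M] [Module R M] {n : ℕ}
    (hM : InjdimLE R n (ModuleCat.of R M)) (k : ℕ) : ∀ (A : ModuleCat.{u} R) (m : ℕ), 1 ≤ m →
      n + 1 ≤ m + k → IsTotallyReflexive R A → EV R A M m := by
  induction k with
  | zero =>
    intro A m _ h _
    exact hM.ev A m h
  | succ k ih =>
    intro A m hm h hA
    obtain ⟨F, A', f, g, h1, h2, h3, h4⟩ := tr_embed hA
    exact EV.left h4 (EV.of_projective m hm) (ih A' (m + 1) (by omega) (by omega) h3)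

theorem pdimLE_of_gdimLE [IsNoetherianRing R] {M : Type u} [AddCommGroup M] [Module R M]
    [Module.Finite R M] {k n : ℕ} (hM : InjdimLE R k (ModuleCat.of R M))
    (h : GdimLE R n (ModuleCat.of R M)) : PdimLE R n (ModuleCat.of R M) := by
  obtain ⟨H, A, f, g, hH, hA, hs⟩ := gdim_embed h
  obtain ⟨r, hr⟩ := EV.extend (Y := M) hs (tr_ev hM k A 1 le_rfl (by omega) hA) LinearMap.id
  have : Module.Finite R (ModuleCat.of R M) := ‹Module.Finite R M›
  apply pdimLE_of_has
  have ret : Retract (ModuleCat.of R M) H :=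
    { i := ModuleCat.ofHom f
      r := ModuleCat.ofHom r
      retract := by
        rw [← ModuleCat.ofHom_comp, hr]; rfl }
  exact ret.hasProjectiveDimensionLT (n + 1)

end Aux

theorem stmt0 (R : Type u) [CommRing R] [IsNoetherianRing R] [IsLocalRing R]
    (M : Type u) [AddCommGroup M] [Module R M] [Module.Finite R M] [Nontrivial M]
    (hinj : ∃ n : ℕ, InjdimLE R n (ModuleCat.of R M)) :
    Pdim R (ModuleCat.of R M) = Gdim R (ModuleCat.of R M) ∧
      (Pdim R (ModuleCat.of R M) ≠ ⊤ ↔ Gdim R (ModuleCat.of R M) ≠ ⊤) := by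
  obtain ⟨k, hk⟩ := hinj
  have key : Pdim R (ModuleCat.of R M) = Gdim R (ModuleCat.of R M) := by
    unfold Pdim Gdim
    congr 1
    ext n
    constructor
    · rintro ⟨m, rfl, h⟩
      exact ⟨m, rfl, gdimLE_of_pdimLE h⟩
    · rintro ⟨m, rfl, h⟩
      exact ⟨m, rfl, pdimLE_of_gdimLE hk h⟩
  exact ⟨key, by rw [key]⟩
end

section
/- Let R be a commutative Noetherian local ring and let M be a nonzero finitely generated R-module with finite injective dimension. If M has finite Gorenstein dimension, then R is Gorenstein. -/
open CategoryTheory Pointwise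

universe u

variable (R : Type u) [CommRing R]

namespace HolmAux

/-- Vanishing of the modern Ext. -/
abbrev EV (R : Type u) [CommRing R] (X Y : Type u) [AddCommGroup X] [Module R X]
    [AddCommGroup Y] [Module R Y] (n : ℕ) : Prop :=
  Subsingleton (Abelian.Ext.{u} (ModuleCat.of R X) (ModuleCat.of R Y) n)

theorem ev_of_extVanish (R : Type u) [CommRing R] (X Y : Type u) [AddCommGroup X] [Module R X]
    [AddCommGroup Y] [Module R Y] (n : ℕ) (h : ExtVanish R X Y (n + 1)) : EV R X Y (n + 1) := by
  let P := projectiveResolution (ModuleCat.of R X)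
  have e := P.isoExt (R := R) (n + 1) (ModuleCat.of R Y)
  have hz : Limits.IsZero ((P.complex.linearYonedaObj R (ModuleCat.of R Y)).homology (n+1)) := by
    refine Limits.IsZero.of_iso ?_ e.symm
    rw [ModuleCat.isZero_iff_subsingleton]
    exact h
  rw [← HomologicalComplex.exactAt_iff_isZero_homology,
    HomologicalComplex.exactAt_iff' _ n (n+1) (n+2) (by simp) (by simp),
    ShortComplex.moduleCat_exact_iff] at hz
  refine subsingleton_of_forall_eq 0 fun α => ?_
  obtain ⟨f, hf, rfl⟩ := P.extMk_surjective α (n+2) rfl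
  rw [P.extMk_eq_zero_iff _ _ _ _ n rfl]
  obtain ⟨g, hg⟩ := hz f hf
  exact ⟨g, hg⟩

/-- elementary vanishing of `Ext^1`. -/
def E1 (R : Type u) [CommRing R] (X Y : Type u) [AddCommGroup X] [Module R X]
    [AddCommGroup Y] [Module R Y] : Prop :=
  ∀ (A B : Type u) [AddCommGroup A] [Module R A] [AddCommGroup B] [Module R B]
    (f : A →ₗ[R] B) (g : B →ₗ[R] X), IsShortExact R f g → ∀ φ : A →ₗ[R] Y,
      ∃ ψ : B →ₗ[R] Y, ψ ∘ₗ f = φ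

section
variable {R : Type u} [CommRing R] {A B C : Type u} [AddCommGroup A] [Module R A]
    [AddCommGroup B] [Module R B] [AddCommGroup C] [Module R C]

/-- short complex -/
abbrev sc (f : A →ₗ[R] B) (g : B →ₗ[R] C) (h : IsShortExact R f g) :
    ShortComplex (ModuleCat.{u} R) :=
  ShortComplex.mk (ModuleCat.ofHom f) (ModuleCat.ofHom g)
    (by ext x; exact h.2.2.apply_apply_eq_zero x)

theorem sc_shortExact (f : A →ₗ[R] B) (g : B →ₗ[R] C) (h : IsShortExact R f g) :
    (sc f g h).ShortExact :=
  ModuleCat.shortComplex_shortExact _ h.2.2 h.1 h.2.1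
end

theorem e1_of_ev (R : Type u) [CommRing R] (X Y : Type u) [AddCommGroup X] [Module R X]
    [AddCommGroup Y] [Module R Y] (h : EV R X Y 1) : E1 R X Y := by
  intro A B _ _ _ _ f g hfg φ
  obtain ⟨x₂, hx⟩ := Abelian.Ext.contravariant_sequence_exact₁ (sc_shortExact f g hfg)
    (ModuleCat.of R Y) (n₁ := 1) (Abelian.Ext.mk₀ (ModuleCat.ofHom φ)) rfl (h.elim _ _)
  obtain ⟨ψ, rfl⟩ := Abelian.Ext.homEquiv₀.symm.surjective x₂
  refine ⟨ψ.hom, ?_⟩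
  simp only [Abelian.Ext.homEquiv₀_symm_apply, Abelian.Ext.mk₀_comp_mk₀] at hx
  have := Abelian.Ext.homEquiv₀.symm.injective hx
  exact congrArg ModuleCat.Hom.hom this

theorem ev_of_shift {R : Type u} [CommRing R] {K F X : Type u} (Y : Type u)
    [AddCommGroup X] [Module R X] [AddCommGroup K] [Module R K] [AddCommGroup F] [Module R F]
    [AddCommGroup Y] [Module R Y] [Module.Projective R F]
    (f : K →ₗ[R] F) (g : F →ₗ[R] X) (h : IsShortExact R f g) (n : ℕ)
    (hX : EV R X Y (n + 2)) : EV R K Y (n + 1) := by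
  refine subsingleton_of_forall_eq 0 fun α => ?_
  have : Projective (ModuleCat.of R F) := (IsProjective.iff_projective F).1 inferInstance
  obtain ⟨x₂, hx⟩ := Abelian.Ext.contravariant_sequence_exact₁ (sc_shortExact f g h)
    (ModuleCat.of R Y) (n₁ := n + 2) α (by omega) (hX.elim _ _)
  rw [← hx, Abelian.Ext.eq_zero_of_projective x₂, Abelian.Ext.comp_zero]

end HolmAux

namespace HolmAux

section
variable {R : Type u} [CommRing R]

theorem exists_factor {G X C : Type u} [AddCommGroup G] [Module R G] [AddCommGroup X] [Module R X]
    [AddCommGroup C] [Module R C] (p : G →ₗ[R] X) (hp : Function.Surjective p) (q : G →ₗ[R] C)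
    (h : ∀ x, p x = 0 → q x = 0) : ∃ r : X →ₗ[R] C, ∀ x, r (p x) = q x := by
  refine ⟨(LinearMap.ker p).liftQ q (fun x hx => h x hx) ∘ₗ
    (p.quotKerEquivOfSurjective hp).symm.toLinearMap, fun x => ?_⟩
  have : (p.quotKerEquivOfSurjective hp).symm (p x) = Submodule.Quotient.mk x := by
    rw [LinearEquiv.symm_apply_eq]; rfl
  rw [LinearMap.comp_apply, LinearEquiv.coe_coe, this]
  rfl

theorem e1_free {X : Type u} [AddCommGroup X] [Module R X] (h : E1 R X R) (G : Type u)
    [AddCommGroup G] [Module R G] [Module.Free R G] [Module.Finite R G] : E1 R X G := by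
  intro A B _ _ _ _ f g hfg φ
  let b := Module.Free.chooseBasis R G
  have := fun i => h A B f g hfg ((b.coord i) ∘ₗ φ)
  choose ψ hψ using this
  refine ⟨b.equivFun.symm.toLinearMap ∘ₗ LinearMap.pi ψ, ?_⟩
  ext a
  apply b.equivFun.injective
  rw [LinearMap.comp_apply, LinearMap.comp_apply, LinearEquiv.coe_coe, LinearEquiv.apply_symm_apply]
  ext i
  exact LinearMap.congr_fun (hψ i) a

theorem e1_ext {A B C Y : Type u} [AddCommGroup A] [Module R A]
    [AddCommGroup B] [Module R B] [AddCommGroup C] [Module R C] [AddCommGroup Y] [Module R Y]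
    (f : A →ₗ[R] B) (g : B →ₗ[R] C) (h : IsShortExact R f g) (hA : E1 R A Y) (hC : E1 R C Y) :
    E1 R B Y := by
  intro S T _ _ _ _ i p hip φ
  let N : Submodule R T := (LinearMap.range f).comap p
  obtain ⟨hi, hp, he⟩ := hip
  let i' : S →ₗ[R] N := i.codRestrict N (fun s => by simp [N, he.apply_apply_eq_zero])
  let p' : N →ₗ[R] A := (LinearEquiv.ofInjective f h.1).symm.toLinearMap ∘ₗ
    (p.restrict (p := N) (q := LinearMap.range f) (fun x hx => hx))
  have hp' : ∀ x : N, f (p' x) = p x := by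
    intro x
    simp [p']
  obtain ⟨ψ, hψ⟩ := hA S N i' p' ⟨fun a b hab => hi (congrArg Subtype.val hab), fun a => by
      obtain ⟨t, ht⟩ := hp (f a)
      refine ⟨⟨t, a, ht.symm⟩, h.1 ?_⟩
      exact (hp' _).trans ht, fun x => by
      constructor
      · intro hx
        have := hp' x
        rw [hx, map_zero] at this
        obtain ⟨s, hs⟩ := (he x).1 this.symm
        exact ⟨s, Subtype.ext hs⟩
      · rintro ⟨s, rfl⟩
        apply h.1
        rw [hp', map_zero]
        exact he.apply_apply_eq_zero s⟩ φ
  obtain ⟨χ, hχ⟩ := hC N T N.subtype (g ∘ₗ p) ⟨N.injective_subtype, h.2.1.comp hp, fun x => by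
      rw [LinearMap.comp_apply, h.2.2 (p x)]
      simp [N]⟩ ψ
  refine ⟨χ, ?_⟩
  rw [← hψ, ← hχ]
  rfl

theorem e1_of_proj {A F X Y : Type u} [AddCommGroup A] [Module R A]
    [AddCommGroup F] [Module R F] [AddCommGroup X] [Module R X] [AddCommGroup Y] [Module R Y]
    [Module.Projective R F]
    (f : A →ₗ[R] F) (g : F →ₗ[R] X) (h : IsShortExact R f g)
    (hY : ∀ φ : A →ₗ[R] Y, ∃ ψ : F →ₗ[R] Y, ψ ∘ₗ f = φ) : E1 R X Y := by
  intro S T _ _ _ _ i p hip φ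
  obtain ⟨l, hl⟩ := Module.projective_lifting_property p g hip.2.1
  have hl' : ∀ x, p (l x) = g x := fun x => LinearMap.congr_fun hl x
  have h1 : ∀ a, l (f a) ∈ LinearMap.range i := fun a => by
    have := (hip.2.2 (l (f a))).1 (by rw [hl', h.2.2.apply_apply_eq_zero])
    exact this
  let m : A →ₗ[R] S := (LinearEquiv.ofInjective i hip.1).symm.toLinearMap ∘ₗ
    ((l ∘ₗ f).codRestrict _ h1)
  have hm : ∀ a, i (m a) = l (f a) := by
    intro a
    simp [m]
  obtain ⟨θ, hθ⟩ := hY (φ ∘ₗ m)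
  have hθ' : ∀ a, θ (f a) = φ (m a) := fun a => LinearMap.congr_fun hθ a
  obtain ⟨r, hr⟩ := exists_factor (l.coprod i) (fun t => by
      obtain ⟨x, hx⟩ := h.2.1 (p t)
      obtain ⟨s, hs⟩ := (hip.2.2 (t - l x)).1 (by simp [hl', hx])
      exact ⟨(x, s), by simp [hs]⟩) (θ.coprod φ) (fun ⟨x, s⟩ hx => by
      simp only [LinearMap.coprod_apply] at hx ⊢
      have : g x = 0 := by
        have := congrArg p hx
        simpa [hl', hip.2.2.apply_apply_eq_zero] using this
      obtain ⟨a, rfl⟩ := (h.2.2 x).1 this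
      rw [← hm, ← map_add] at hx
      have := hip.1 (hx.trans (map_zero i).symm)
      rw [hθ', ← map_add, this, map_zero])
  refine ⟨r, ?_⟩
  ext s
  simpa using hr (0, s)

end

/-- A class of modules with free coresolutions. -/
def GoodCls (R : Type u) [CommRing R] (Q : ModuleCat.{u} R → Prop) : Prop :=
  ∀ X, Q X → E1 R X R ∧ ∃ (G X' : ModuleCat.{u} R) (f : X →ₗ[R] G) (g : G →ₗ[R] X'),
    Module.Free R G ∧ Module.Finite R G ∧ IsShortExact R f g ∧ Q X'

/-- Largest such class. -/
def InX (R : Type u) [CommRing R] (X : ModuleCat.{u} R) : Prop := ∃ Q, GoodCls R Q ∧ Q X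

theorem InX.good (R : Type u) [CommRing R] : GoodCls R (InX R) := by
  rintro X ⟨Q, hQ, hX⟩
  obtain ⟨h1, G, X', f, g, a, b, c, d⟩ := hQ X hX
  exact ⟨h1, G, X', f, g, a, b, c, Q, hQ, d⟩

theorem inX_ext (R : Type u) [CommRing R] {A B C : ModuleCat.{u} R}
    (f : A →ₗ[R] B) (g : B →ₗ[R] C) (h : IsShortExact R f g) (hA : InX R A) (hC : InX R C) :
    InX R B := by
  refine ⟨fun W => ∃ (A C : ModuleCat.{u} R) (f : A →ₗ[R] W) (g : W →ₗ[R] C),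
    IsShortExact R f g ∧ InX R A ∧ InX R C, ?_, A, C, f, g, h, hA, hC⟩
  clear! A B C
  rintro W ⟨A, C, f, g, h, hA, hC⟩
  obtain ⟨a1, G, A', i, p, _, _, hip, hA'⟩ := InX.good R A hA
  obtain ⟨c1, G', C', i', p', _, _, hip', hC'⟩ := InX.good R C hC
  refine ⟨e1_ext f g h a1 c1, ?_⟩
  obtain ⟨α, hα⟩ := e1_free c1 G A W f g h i
  have hα' : ∀ a, α (f a) = i a := fun a => LinearMap.congr_fun hα a
  let H : W →ₗ[R] (G × G') := α.prod (i' ∘ₗ g)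
  let D := (G × G') ⧸ LinearMap.range H
  obtain ⟨r, hr⟩ := exists_factor p hip.2.1 ((LinearMap.range H).mkQ ∘ₗ LinearMap.inl R G G')
    (fun x hx => by
      obtain ⟨a, rfl⟩ := (hip.2.2 x).1 hx
      simp only [LinearMap.comp_apply, Submodule.mkQ_apply, Submodule.Quotient.mk_eq_zero]
      exact ⟨f a, by simp [H, hα', h.2.2.apply_apply_eq_zero]⟩)
  let s : D →ₗ[R] C' := (LinearMap.range H).liftQ (p' ∘ₗ LinearMap.snd R G G') (by
    rintro _ ⟨w, rfl⟩
    simp [H, hip'.2.2.apply_apply_eq_zero])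
  have hs : ∀ z, s ((LinearMap.range H).mkQ z) = p' z.2 := fun z => rfl
  have hH : ∀ w, H w = (α w, i' (g w)) := fun w => rfl
  refine ⟨ModuleCat.of R (G × G'), ModuleCat.of R D, H, (LinearMap.range H).mkQ,
    inferInstanceAs (Module.Free R (G × G')), inferInstanceAs (Module.Finite R (G × G')),
    ⟨?_, Submodule.mkQ_surjective _, ?_⟩, A', C', r, s, ⟨?_, ?_, ?_⟩, hA', hC'⟩
  · rw [← LinearMap.ker_eq_bot, LinearMap.ker_eq_bot']
    intro w hw
    rw [hH, Prod.mk_eq_zero] at hw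
    have h2 : g w = 0 := hip'.1 (by simpa using hw.2)
    obtain ⟨a, rfl⟩ := (h.2.2 w).1 h2
    have : a = 0 := hip.1 (by rw [← hα', map_zero]; exact hw.1)
    simp [this]
  · exact LinearMap.exact_map_mkQ_range H
  · rw [← LinearMap.ker_eq_bot, LinearMap.ker_eq_bot']
    intro x hx
    obtain ⟨x, rfl⟩ := hip.2.1 x
    rw [hr] at hx
    obtain ⟨w, hw⟩ := (Submodule.Quotient.mk_eq_zero _).1 hx
    rw [hH, LinearMap.inl_apply, Prod.mk.injEq] at hw
    have h2 : g w = 0 := hip'.1 (by simpa using hw.2)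
    obtain ⟨a, rfl⟩ := (h.2.2 w).1 h2
    rw [← hw.1, hα', hip.2.2.apply_apply_eq_zero]
  · intro c
    obtain ⟨y, rfl⟩ := hip'.2.1 c
    exact ⟨(LinearMap.range H).mkQ (0, y), hs _⟩
  · intro d
    constructor
    · intro hd
      obtain ⟨⟨x, y⟩, rfl⟩ := Submodule.mkQ_surjective _ d
      have hd' : p' y = 0 := (hs _).symm.trans hd
      obtain ⟨c, rfl⟩ := (hip'.2.2 y).1 hd'
      obtain ⟨w, rfl⟩ := h.2.1 c
      refine ⟨p (x - α w), ?_⟩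
      rw [hr]
      simp only [LinearMap.comp_apply, Submodule.mkQ_apply]
      rw [Submodule.Quotient.eq]
      exact ⟨-w, by simp [H]⟩
    · rintro ⟨x, rfl⟩
      obtain ⟨x, rfl⟩ := hip.2.1 x
      rw [hr]
      exact (hs _).trans (map_zero p')

theorem e1_injdim (R : Type u) [CommRing R] (n : ℕ) : ∀ (M X : ModuleCat.{u} R),
    InjdimLE R n M → InX R X → E1 R X M := by
  induction n with
  | zero =>
    intro M X hM _ S T _ _ _ _ i p hip φ
    have hM' : Module.Injective R M := hM
    obtain ⟨h, hh⟩ := hM'.out i hip.1 φ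
    exact ⟨h, LinearMap.ext hh⟩
  | succ n ih =>
    rintro M X ⟨I, C, j, q, hI, hjq, hC⟩ hX S T _ _ _ _ i p hip φ
    obtain ⟨x1, G, X', f, g, _, _, hfg, hX'⟩ := InX.good R X hX
    obtain ⟨h, hh⟩ := hI.out i hip.1 (j ∘ₗ φ)
    obtain ⟨r, hr⟩ := exists_factor p hip.2.1 (q ∘ₗ h) (fun x hx => by
      obtain ⟨a, rfl⟩ := (hip.2.2 x).1 hx
      rw [LinearMap.comp_apply, hh]
      exact hjq.2.2.apply_apply_eq_zero _)
    obtain ⟨r', hr'⟩ := ih C X' hC hX' _ _ f g hfg r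
    obtain ⟨l, hl⟩ := Module.projective_lifting_property q r' hjq.2.1
    have hmem : ∀ t, (h - l ∘ₗ f ∘ₗ p) t ∈ LinearMap.range j := fun t => by
      refine (hjq.2.2 _).1 ?_
      have e1 : q (l (f (p t))) = r' (f (p t)) := LinearMap.congr_fun hl _
      have e2 : r' (f (p t)) = r (p t) := LinearMap.congr_fun hr' _
      have e3 := hr t
      simp only [LinearMap.comp_apply] at e3
      simp [e1, e2, e3]
    refine ⟨(LinearEquiv.ofInjective j hjq.1).symm.toLinearMap ∘ₗ
      ((h - l ∘ₗ f ∘ₗ p).codRestrict _ hmem), ?_⟩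
    ext s
    apply hjq.1
    have := congrArg Subtype.val ((LinearEquiv.ofInjective j hjq.1).apply_symm_apply
      (((h - l ∘ₗ f ∘ₗ p).codRestrict _ hmem) (i s)))
    simp only [LinearEquiv.ofInjective_apply] at this
    simp only [LinearMap.comp_apply, LinearEquiv.coe_coe]
    rw [this]
    simp [hh, hip.2.2.apply_apply_eq_zero]

end HolmAux

namespace HolmAux

/-- auxiliary property of a module of which we take the dual -/
structure LCls (R : Type u) [CommRing R] (L : Type u) [AddCommGroup L] [Module R L] : Prop where
  fin : Module.Finite R L
  bij : Function.Bijective (Module.Dual.eval R L)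
  ev : ∀ i : ℕ, EV R L R (i + 1)

theorem lcls_step (R : Type u) [CommRing R] [IsNoetherianRing R] (L : Type u) [AddCommGroup L]
    [Module R L] (h : LCls R L) :
    ∃ (F K : ModuleCat.{u} R) (f : Module.Dual R L →ₗ[R] Module.Dual R F)
      (g : Module.Dual R F →ₗ[R] Module.Dual R K), Module.Free R F ∧ Module.Finite R F ∧
      IsShortExact R f g ∧ LCls R K ∧ E1 R (Module.Dual R K) R := by
  have := h.fin
  obtain ⟨n, p, hp⟩ := Module.Finite.exists_fin' R L
  let K := LinearMap.ker p
  have hse : IsShortExact R K.subtype p := ⟨K.injective_subtype, hp, LinearMap.exact_subtype_ker_map p⟩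
  have hE : E1 R L R := e1_of_ev R L R (h.ev 0)
  have hext : ∀ μ : Module.Dual R K, ∃ ν : Module.Dual R (Fin n → R), ν ∘ₗ K.subtype = μ :=
    fun μ => hE _ _ _ _ hse μ
  have hrefl : Function.Bijective (Module.Dual.eval R (Fin n → R)) :=
    Module.bijective_dual_eval R _
  have hses : IsShortExact R (p.dualMap) (K.subtype.dualMap) := by
    refine ⟨LinearMap.dualMap_injective_of_surjective hp, fun μ => hext μ, fun ν => ⟨fun hν => ?_, ?_⟩⟩
    · obtain ⟨r, hr⟩ := exists_factor p hp ν (fun x hx => LinearMap.congr_fun hν ⟨x, hx⟩)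
      exact ⟨r, LinearMap.ext hr⟩
    · rintro ⟨r, rfl⟩
      ext x
      have : p x = 0 := x.2
      simp [this]
  refine ⟨ModuleCat.of R (Fin n → R), ModuleCat.of R K, p.dualMap, K.subtype.dualMap,
    inferInstanceAs (Module.Free R (Fin n → R)), inferInstanceAs (Module.Finite R (Fin n → R)),
    hses, ⟨inferInstanceAs (Module.Finite R K), ⟨?_, ?_⟩, fun i => ev_of_shift R _ _ hse i (h.ev (i+1))⟩, ?_⟩
  · rw [← LinearMap.ker_eq_bot, LinearMap.ker_eq_bot']
    intro k hk
    apply Subtype.ext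
    apply hrefl.1
    ext ν
    exact (LinearMap.congr_fun hk (ν ∘ₗ K.subtype)).trans (map_zero ν).symm
  · intro ξ
    obtain ⟨x, hx⟩ := hrefl.2 (ξ ∘ₗ K.subtype.dualMap)
    have hx' : ∀ ν : Module.Dual R (Fin n → R), ν x = ξ (ν ∘ₗ K.subtype) :=
      fun ν => LinearMap.congr_fun hx ν
    have hxK : p x = 0 := by
      apply h.bij.1
      ext l
      have := hx' (l ∘ₗ p)
      have h0 : (l ∘ₗ p) ∘ₗ K.subtype = 0 := by
        ext ⟨y, hy⟩
        have : p y = 0 := hy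
        simp [this]
      rw [h0, map_zero] at this
      simpa using this
    refine ⟨⟨x, hxK⟩, ?_⟩
    ext μ
    obtain ⟨ν, rfl⟩ := hext μ
    exact hx' ν
  · refine e1_of_proj _ _ hses fun φ => ?_
    obtain ⟨l, rfl⟩ := h.bij.2 φ
    obtain ⟨x, rfl⟩ := hp l
    exact ⟨Module.Dual.eval R _ x, by ext; rfl⟩

theorem inX_of_tr (R : Type u) [CommRing R] [IsNoetherianRing R] (X : ModuleCat.{u} R)
    (h : IsTotallyReflexive R X) : InX R X := by
  refine ⟨fun X => E1 R X R ∧ ∃ L : ModuleCat.{u} R, LCls R L ∧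
    Nonempty (X ≃ₗ[R] Module.Dual R L), ?_, ?_⟩
  · rintro X ⟨hX, L, hL, ⟨e⟩⟩
    refine ⟨hX, ?_⟩
    obtain ⟨F, K, f, g, _, _, hfg, hK, hE⟩ := lcls_step R L hL
    refine ⟨ModuleCat.of R (Module.Dual R F), ModuleCat.of R (Module.Dual R K),
      f ∘ₗ e.toLinearMap, g, inferInstanceAs (Module.Free R (Module.Dual R F)),
      inferInstanceAs (Module.Finite R (Module.Dual R F)),
      ⟨hfg.1.comp e.injective, hfg.2.1, fun x => ?_⟩, hE, K, hK, ⟨LinearEquiv.refl _ _⟩⟩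
    rw [hfg.2.2 x]
    constructor
    · rintro ⟨y, rfl⟩
      exact ⟨e.symm y, by simp⟩
    · rintro ⟨y, rfl⟩
      exact ⟨e y, rfl⟩
  · obtain ⟨h1, h2, h3, h4⟩ := h
    have hdf : Module.Finite R (Module.Dual R X) := by
      obtain ⟨n, p, hp⟩ := Module.Finite.exists_fin' R X
      exact Module.Finite.of_injective p.dualMap (LinearMap.dualMap_injective_of_surjective hp)
    refine ⟨e1_of_ev R X R (ev_of_extVanish R X R 0 (h3 1 le_rfl)), ModuleCat.of R (Module.Dual R X),
      ⟨hdf, ?_, fun i => ev_of_extVanish R _ R i (h4 _ (by omega))⟩,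
      ⟨LinearEquiv.ofBijective _ h2⟩⟩
    have : Module.IsReflexive R X := ⟨h2⟩
    exact Module.bijective_dual_eval R (Module.Dual R X)

theorem pushout (R : Type u) [CommRing R] {K X M P Y : Type u} [AddCommGroup K] [Module R K]
    [AddCommGroup X] [Module R X] [AddCommGroup M] [Module R M] [AddCommGroup P] [Module R P]
    [AddCommGroup Y] [Module R Y] (i : K →ₗ[R] X) (q : X →ₗ[R] M) (h : IsShortExact R i q)
    (j : K →ₗ[R] P) (p : P →ₗ[R] Y) (h' : IsShortExact R j p) :
    ∃ (W : ModuleCat.{u} R) (a : X →ₗ[R] W) (c : W →ₗ[R] Y) (b : P →ₗ[R] W) (e : W →ₗ[R] M),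
      IsShortExact R a c ∧ IsShortExact R b e := by
  let N : Submodule R (X × P) := LinearMap.range (i.prod (-j))
  have hN : ∀ k, (i k, - j k) ∈ N := fun k => ⟨k, rfl⟩
  let c : (X × P) ⧸ N →ₗ[R] Y := N.liftQ (p ∘ₗ LinearMap.snd R X P) (by
    rintro _ ⟨k, rfl⟩
    simp [h'.2.2.apply_apply_eq_zero])
  let e : (X × P) ⧸ N →ₗ[R] M := N.liftQ (q ∘ₗ LinearMap.fst R X P) (by
    rintro _ ⟨k, rfl⟩
    simp [h.2.2.apply_apply_eq_zero])
  have hc : ∀ z, c (N.mkQ z) = p z.2 := fun _ => rfl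
  have he : ∀ z, e (N.mkQ z) = q z.1 := fun _ => rfl
  refine ⟨ModuleCat.of R ((X × P) ⧸ N), N.mkQ ∘ₗ LinearMap.inl R X P, c,
    N.mkQ ∘ₗ LinearMap.inr R X P, e, ⟨?_, ?_, ?_⟩, ⟨?_, ?_, ?_⟩⟩
  · rw [← LinearMap.ker_eq_bot, LinearMap.ker_eq_bot']
    intro x hx
    obtain ⟨k, hk⟩ := (Submodule.Quotient.mk_eq_zero _).1 hx
    obtain ⟨h1, h2⟩ := Prod.ext_iff.1 hk
    have : k = 0 := h'.1 (by simpa using h2)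
    simpa [this] using h1.symm
  · intro y
    obtain ⟨z, rfl⟩ := h'.2.1 y
    exact ⟨N.mkQ (0, z), hc _⟩
  · intro w
    constructor
    · intro hw
      obtain ⟨⟨x, z⟩, rfl⟩ := N.mkQ_surjective w
      obtain ⟨k, rfl⟩ := (h'.2.2 z).1 ((hc _).symm.trans hw)
      refine ⟨x + i k, ?_⟩
      exact (Submodule.Quotient.eq N).2 (by simpa using hN k)
    · rintro ⟨x, rfl⟩
      exact (hc _).trans (map_zero p)
  · rw [← LinearMap.ker_eq_bot, LinearMap.ker_eq_bot']
    intro x hx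
    obtain ⟨k, hk⟩ := (Submodule.Quotient.mk_eq_zero _).1 hx
    obtain ⟨h1, h2⟩ := Prod.ext_iff.1 hk
    have : k = 0 := h.1 (by simpa using h1)
    simpa [this] using h2.symm
  · intro y
    obtain ⟨z, rfl⟩ := h.2.1 y
    exact ⟨N.mkQ (z, 0), he _⟩
  · intro w
    constructor
    · intro hw
      obtain ⟨⟨x, z⟩, rfl⟩ := N.mkQ_surjective w
      obtain ⟨k, rfl⟩ := (h.2.2 x).1 ((he _).symm.trans hw)
      refine ⟨z + j k, ?_⟩
      exact (Submodule.Quotient.eq N).2 (by simpa using hN (-k))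
    · rintro ⟨x, rfl⟩
      exact (he _).trans (map_zero q)

theorem approx (R : Type u) [CommRing R] [IsNoetherianRing R] (n : ℕ) : ∀ M : ModuleCat.{u} R,
    GdimLE R n M → ∃ (P X : ModuleCat.{u} R) (f : M →ₗ[R] P) (g : P →ₗ[R] X),
      IsShortExact R f g ∧ InX R X ∧ HasProjectiveDimensionLT P (n + 1) := by
  have hfree : ∀ G : ModuleCat.{u} R, Module.Free R G → HasProjectiveDimensionLT G 1 := by
    intro G hG
    have : Projective (ModuleCat.of R G) :=
      (IsProjective.iff_projective G).1 (by have := hG; exact Module.Projective.of_free)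
    exact (inferInstance : HasProjectiveDimensionLT (ModuleCat.of R G) 1)
  induction n with
  | zero =>
    intro M hM
    obtain ⟨_, G, X, f, g, hG, _, hfg, hX⟩ := InX.good R M (inX_of_tr R M hM)
    exact ⟨G, X, f, g, hfg, hX, hfree G hG⟩
  | succ n ih =>
    rintro M ⟨X, K, i, q, hX, hiq, hK⟩
    obtain ⟨P, Y, j, p, hjp, hY, hP⟩ := ih K hK
    obtain ⟨W, a, c, b, e, hac, hbe⟩ := pushout R i q hiq j p hjp
    have hW : InX R W := inX_ext R a c hac (inX_of_tr R X hX) hY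
    obtain ⟨_, G, Z, s, t, hG, _, hst, hZ⟩ := InX.good R W hW
    let N := LinearMap.range (s ∘ₗ b)
    obtain ⟨r, hr⟩ := exists_factor e hbe.2.1 (N.mkQ ∘ₗ s) (fun w hw => by
      obtain ⟨y, rfl⟩ := (hbe.2.2 w).1 hw
      exact (Submodule.Quotient.mk_eq_zero N).2 ⟨y, rfl⟩)
    let t' : G ⧸ N →ₗ[R] Z := N.liftQ t (by
      rintro _ ⟨y, rfl⟩
      exact hst.2.2.apply_apply_eq_zero _)
    have ht' : ∀ x, t' (N.mkQ x) = t x := fun _ => rfl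
    refine ⟨ModuleCat.of R (G ⧸ N), Z, r, t', ⟨?_, ?_, ?_⟩, hZ, ?_⟩
    · rw [← LinearMap.ker_eq_bot, LinearMap.ker_eq_bot']
      intro m hm
      obtain ⟨w, rfl⟩ := hbe.2.1 m
      rw [hr] at hm
      obtain ⟨y, hy⟩ := (Submodule.Quotient.mk_eq_zero N).1 hm
      have := hst.1 hy
      rw [← this]
      exact hbe.2.2.apply_apply_eq_zero _
    · intro z
      obtain ⟨x, rfl⟩ := hst.2.1 z
      exact ⟨N.mkQ x, ht' x⟩
    · intro x
      obtain ⟨x, rfl⟩ := N.mkQ_surjective x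
      constructor
      · intro hx
        obtain ⟨w, rfl⟩ := (hst.2.2 x).1 ((ht' x).symm.trans hx)
        exact ⟨e w, hr w⟩
      · rintro ⟨m, hm⟩
        obtain ⟨w, rfl⟩ := hbe.2.1 m
        rw [← hm, hr]
        exact (ht' _).trans (hst.2.2.apply_apply_eq_zero _)
    · have hse : IsShortExact R (s ∘ₗ b) N.mkQ :=
        ⟨hst.1.comp hbe.1, N.mkQ_surjective, LinearMap.exact_map_mkQ_range _⟩
      have := hfree G hG
      exact (sc_shortExact _ _ hse).hasProjectiveDimensionLT_X₃ (n + 1) hP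
        (hasProjectiveDimensionLT_of_ge G 1 _ (by omega))

theorem pd_finite (R : Type u) [CommRing R] [IsNoetherianRing R] (M : ModuleCat.{u} R)
    (hinj : ∃ n : ℕ, InjdimLE R n M) (hG : ∃ n : ℕ, GdimLE R n M) :
    ∃ n, HasProjectiveDimensionLT M n := by
  obtain ⟨m, hm⟩ := hinj
  obtain ⟨n, hn⟩ := hG
  obtain ⟨P, X, f, g, hfg, hX, hP⟩ := approx R n M hn
  obtain ⟨ψ, hψ⟩ := e1_injdim R m M X hm hX _ _ f g hfg LinearMap.id
  have r : Retract M P := ⟨ModuleCat.ofHom f, ModuleCat.ofHom ψ, by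
    ext x; exact LinearMap.congr_fun hψ x⟩
  exact ⟨n + 1, r.hasProjectiveDimensionLT _⟩

end HolmAux

namespace HolmAux

theorem exists_minimal (R : Type u) [CommRing R] [IsLocalRing R] (M : Type u) [AddCommGroup M]
    [Module R M] [Module.Finite R M] :
    ∃ (b : ℕ) (p : (Fin b → R) →ₗ[R] M), Function.Surjective p ∧
      ∀ x, p x = 0 → ∀ i, x i ∈ IsLocalRing.maximalIdeal R := by
  classical
  have hex : ∃ n : ℕ, ∃ p : (Fin n → R) →ₗ[R] M, Function.Surjective p :=
    Module.Finite.exists_fin' R M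
  obtain ⟨p, hp⟩ := Nat.find_spec hex
  refine ⟨Nat.find hex, p, hp, fun x hx i => ?_⟩
  by_contra hi
  have hmin : ∀ m, m < Nat.find hex → ¬ ∃ p : (Fin m → R) →ₗ[R] M, Function.Surjective p :=
    fun m hm => Nat.find_min hex hm
  generalize Nat.find hex = n at *
  cases n with
  | zero => exact i.elim0
  | succ n =>
    have hu : IsUnit (x i) := by
      by_contra h
      exact hi h
    obtain ⟨u, hu⟩ := hu
    let L : (Fin n → R) →ₗ[R] (Fin (n + 1) → R) :=
      { toFun := fun y => i.insertNth (0 : R) y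
        map_add' := fun y z => by
          ext k
          refine Fin.succAboveCases i ?_ (fun j => ?_) k <;> simp
        map_smul' := fun r y => by
          ext k
          refine Fin.succAboveCases i ?_ (fun j => ?_) k <;> simp }
    apply hmin n (Nat.lt_succ_self n)
    refine ⟨p ∘ₗ L, fun m => ?_⟩
    obtain ⟨z, rfl⟩ := hp m
    let z' := z - (z i * ↑u⁻¹) • x
    refine ⟨i.removeNth z', ?_⟩
    have h1 : z' i = 0 := by
      simp [z', ← hu]
    have h2 : L (i.removeNth z') = z' := by
      change i.insertNth (0 : R) (i.removeNth z') = z'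
      rw [← h1]
      exact Fin.insertNth_self_removeNth i z'
    rw [LinearMap.comp_apply, h2]
    simp [z', hx]

/-- Data of a minimal finite free resolution. -/
structure MinRes (R : Type u) [CommRing R] [IsLocalRing R] (n : ℕ) (M : Type u) [AddCommGroup M]
    [Module R M] where
  b : ℕ → ℕ
  A : ∀ j, Matrix (Fin (b j)) (Fin (b (j + 1))) R
  q : (Fin (b 0) → R) →ₗ[R] M
  surj : Function.Surjective q
  bzero : ∀ j, n ≤ j → b j = 0
  mem : ∀ j s t, A j s t ∈ IsLocalRing.maximalIdeal R
  ex0 : ∀ x, q x = 0 ↔ ∃ y, (A 0).mulVec y = x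
  ex : ∀ j x, (A j).mulVec x = 0 ↔ ∃ y, (A (j + 1)).mulVec y = x

theorem exists_minRes (R : Type u) [CommRing R] [IsNoetherianRing R] [IsLocalRing R] (n : ℕ) :
    ∀ (M : Type u) [AddCommGroup M] [Module R M] [Module.Finite R M],
      HasProjectiveDimensionLT (ModuleCat.of R M) n → Nonempty (MinRes R n M) := by
  induction n with
  | zero =>
    intro M _ _ _ h
    have h1 := (hasProjectiveDimensionLT_zero_iff_isZero _).1 h
    rw [ModuleCat.isZero_iff_subsingleton] at h1
    have h1 : Subsingleton M := h1
    refine ⟨⟨fun _ => 0, fun _ => 0, 0, fun m => ⟨0, Subsingleton.elim _ _⟩, fun _ _ => rfl,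
      fun _ s => s.elim0, fun x => ⟨fun _ => ⟨0, Subsingleton.elim _ _⟩, fun _ => rfl⟩,
      fun j x => ⟨fun _ => ⟨0, Subsingleton.elim _ _⟩, fun _ => Subsingleton.elim _ _⟩⟩⟩
  | succ n ih =>
    intro M _ _ _ h
    obtain ⟨b, p, hp, hmin⟩ := exists_minimal R M
    let K := LinearMap.ker p
    have hse : IsShortExact R K.subtype p :=
      ⟨K.injective_subtype, hp, LinearMap.exact_subtype_ker_map p⟩
    have hK : HasProjectiveDimensionLT (ModuleCat.of R K) n := by
      have hpr : Projective (ModuleCat.of R (Fin b → R)) :=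
        (IsProjective.iff_projective _).1 inferInstance
      cases n with
      | zero =>
        have : Projective (ModuleCat.of R M) := projective_iff_hasProjectiveDimensionLT_one.2 h
        have : Module.Projective R M := (IsProjective.iff_projective M).2 this
        obtain ⟨s, hs⟩ := Module.projective_lifting_property p LinearMap.id hp
        have hs' : ∀ m, p (s m) = m := fun m => LinearMap.congr_fun hs m
        let r : (Fin b → R) →ₗ[R] K := (LinearMap.id - s ∘ₗ p).codRestrict K (fun x => by
          simp [K, hs'])
        have hr : ∀ k : K, r k = k := fun k => Subtype.ext (by
          have : p k = 0 := k.2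
          simp [r, this])
        rw [hasProjectiveDimensionLT_zero_iff_isZero, ModuleCat.isZero_iff_subsingleton]
        change Subsingleton K
        have hfg : (⊤ : Submodule R K).FG := Module.Finite.fg_top
        have htop : (⊤ : Submodule R K) ≤ IsLocalRing.maximalIdeal R • (⊤ : Submodule R K) := by
          rintro k -
          rw [← hr k]
          have hk : (k : Fin b → R) = ∑ i, (k : Fin b → R) i • (Pi.single i (1 : R) : Fin b → R) :=
            pi_eq_sum_univ' _
          rw [hk, map_sum]
          refine Submodule.sum_mem _ fun i _ => ?_
          rw [map_smul]
          exact Submodule.smul_mem_smul (hmin _ k.2 i) trivial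
        have hbot := Submodule.eq_bot_of_le_smul_of_le_jacobson_bot (IsLocalRing.maximalIdeal R) ⊤ hfg htop
          (IsLocalRing.maximalIdeal_le_jacobson _)
        exact (Submodule.subsingleton_iff R).1 (subsingleton_of_bot_eq_top hbot.symm)
      | succ n =>
        exact (sc_shortExact _ _ hse).hasProjectiveDimensionLT_X₁ (n + 1)
          (hasProjectiveDimensionLT_of_ge _ 1 _ (by omega)) h
    obtain ⟨S⟩ := ih K hK
    let D : (Fin (S.b 0) → R) →ₗ[R] (Fin b → R) := K.subtype ∘ₗ S.q
    let A0 := LinearMap.toMatrix' D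
    have hA0 : ∀ y, A0.mulVec y = D y := fun y => by
      rw [← Matrix.toLin'_apply, Matrix.toLin'_toMatrix']
    refine ⟨⟨fun j => Nat.casesOn j b S.b, fun j => Nat.casesOn j A0 S.A, p, hp, ?_, ?_, ?_, ?_⟩⟩
    · intro j hj
      cases j with
      | zero => omega
      | succ j => exact S.bzero j (by omega)
    · intro j
      cases j with
      | zero =>
        intro s t
        have : A0 s t = D (Pi.single t 1) s := by rw [← hA0]; simp
        change A0 s t ∈ _
        rw [this]
        exact hmin _ (S.q (Pi.single t 1)).2 s
      | succ j => exact S.mem j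
    · intro x
      change _ ↔ ∃ y, A0.mulVec y = x
      simp only [hA0]
      constructor
      · intro hx
        obtain ⟨y, hy⟩ := S.surj ⟨x, hx⟩
        exact ⟨y, congrArg Subtype.val hy⟩
      · rintro ⟨y, rfl⟩
        exact (S.q y).2
    · intro j
      cases j with
      | zero =>
        intro x
        change A0.mulVec x = 0 ↔ ∃ y, (S.A 0).mulVec y = x
        rw [← S.ex0, hA0]
        exact ⟨fun h => Subtype.ext h, fun h => congrArg Subtype.val h⟩
      | succ j => exact S.ex j

end HolmAux

namespace HolmAux

section act
variable {R : Type u} [CommRing R] {V V' : Type u} [AddCommGroup V] [Module R V]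
  [AddCommGroup V'] [Module R V'] {p q r : ℕ}

/-- action of a matrix on vectors with entries in a module -/
def act (A : Matrix (Fin p) (Fin q) R) : (Fin q → V) →ₗ[R] (Fin p → V) where
  toFun x := fun s => ∑ t, A s t • x t
  map_add' x y := by ext s; simp [Finset.sum_add_distrib]
  map_smul' a x := by ext s; simp [Finset.smul_sum, smul_comm a]

theorem act_apply (A : Matrix (Fin p) (Fin q) R) (x : Fin q → V) (s : Fin p) :
    act A x s = ∑ t, A s t • x t := rfl

/-- apply a map entrywise -/
abbrev cl (p : ℕ) (f : V →ₗ[R] V') : (Fin p → V) →ₗ[R] (Fin p → V') := f.compLeft (Fin p)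

theorem cl_act (A : Matrix (Fin p) (Fin q) R) (f : V →ₗ[R] V') (x : Fin q → V) :
    cl p f (act A x) = act A (cl q f x) := by
  ext s; simp [act_apply]

theorem act_act (A : Matrix (Fin p) (Fin q) R) (B : Matrix (Fin q) (Fin r) R) (x : Fin r → V) :
    act A (act B x) = act (A * B) x := by
  ext s
  simp only [act_apply, Finset.smul_sum, Matrix.mul_apply, Finset.sum_smul, smul_smul]
  exact Finset.sum_comm

theorem act_mulVec (A : Matrix (Fin p) (Fin q) R) (x : Fin q → R) : act A x = A.mulVec x := rfl

theorem act_zero_matrix (x : Fin q → V) : act (0 : Matrix (Fin p) (Fin q) R) x = 0 := by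
  ext s; simp [act_apply]

theorem cl_inj (f : V →ₗ[R] V') (hf : Function.Injective f) : Function.Injective (cl p f) :=
  fun _ _ h => funext fun s => hf (congrFun h s)

end act

/-- shifted injective resolution of `R`. -/
structure IRes (R : Type u) [CommRing R] (N : ℕ) where
  I : ℕ → ModuleCat.{u} R
  d : ∀ i, I i →ₗ[R] I (i + 1)
  e : R →ₗ[R] I N
  inj : ∀ i, Module.Injective R (I i)
  low : ∀ i, i < N → Subsingleton (I i)
  einj : Function.Injective e
  ker : ∀ y, d N y = 0 ↔ ∃ r, e r = y
  dd : ∀ i y, d (i + 1) (d i y) = 0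
  ex : ∀ i, i + 1 ≠ N → ∀ y, d (i + 1) y = 0 → ∃ z, d i z = y

/-- addition, with a recursion rule adapted to our needs -/
def ad : ℕ → ℕ → ℕ
  | m, 0 => m
  | m, j + 1 => ad (m + 1) j

theorem ad_eq (m j : ℕ) : ad m j = m + j := by
  induction j generalizing m with
  | zero => rfl
  | succ j ih => exact (ih (m + 1)).trans (by omega)

section
variable {R : Type u} [CommRing R] {N : ℕ} (T : IRes R N)

/-- differential -/
def dl : ∀ m j, T.I (ad m j) →ₗ[R] T.I (ad (m + 1) j)
  | m, 0 => T.d m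
  | m, j + 1 => dl (m + 1) j

theorem dl_dl (m j : ℕ) : ∀ y, dl T (m + 1) j (dl T m j y) = 0 := by
  induction j generalizing m with
  | zero => exact T.dd m
  | succ j ih => exact ih (m + 1)

theorem dl_ex (m j : ℕ) (h : m + 1 + j ≠ N) :
    ∀ y, dl T (m + 1) j y = 0 → ∃ z, dl T m j z = y := by
  induction j generalizing m with
  | zero => exact T.ex m h
  | succ j ih => exact ih (m + 1) (by omega)

theorem ad_low (m j : ℕ) (h : m + j < N) : Subsingleton (T.I (ad m j)) :=
  T.low _ (by rwa [ad_eq])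

theorem exists_eta (m j : ℕ) (h : m + j = N) : ∃ η : R →ₗ[R] T.I (ad m j),
    Function.Injective η ∧ ∀ y, dl T m j y = 0 ↔ ∃ r, η r = y := by
  induction j generalizing m with
  | zero =>
    obtain rfl : m = N := h
    exact ⟨T.e, T.einj, T.ker⟩
  | succ j ih => exact ih (m + 1) (by omega)

variable (b : ℕ → ℕ) (A : ∀ j, Matrix (Fin (b j)) (Fin (b (j + 1))) R)

/-- total complex -/
abbrev J (m : ℕ) : Type u := ∀ j, Fin (b j) → T.I (ad m j)

/-- the second differential -/
def ac (m j : ℕ) (x : Fin (b (j + 1)) → T.I (ad m (j + 1))) : Fin (b j) → T.I (ad (m + 1) j) :=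
  act (V := T.I (ad (m + 1) j)) (A j) x

/-- total differential -/
def DD (m : ℕ) : J T b m →ₗ[R] J T b (m + 1) where
  toFun x := fun j => cl (b j) (dl T m j) (x j) + (-1 : R) ^ m • ac T b A m j (x (j + 1))
  map_add' x y := by
    funext j
    have h1 : ac T b A m j (x (j + 1) + y (j + 1)) =
      ac T b A m j (x (j + 1)) + ac T b A m j (y (j + 1)) := map_add (act (A j)) _ _
    simp only [Pi.add_apply, map_add, h1, smul_add]
    abel
  map_smul' a x := by
    funext j
    have h1 : ac T b A m j (a • x (j + 1)) = a • ac T b A m j (x (j + 1)) :=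
      map_smul (act (A j)) _ _
    simp only [Pi.smul_apply, map_smul, h1, smul_add, RingHom.id_apply, smul_comm a]

theorem DD_apply (m : ℕ) (x : J T b m) (j : ℕ) : DD T b A m x j =
    cl (b j) (dl T m j) (x j) + (-1 : R) ^ m • ac T b A m j (x (j + 1)) := rfl

theorem ac_add (m j : ℕ) (x y : Fin (b (j + 1)) → T.I (ad m (j + 1))) :
    ac T b A m j (x + y) = ac T b A m j x + ac T b A m j y := map_add (act (A j)) _ _

theorem ac_smul (m j : ℕ) (a : R) (x : Fin (b (j + 1)) → T.I (ad m (j + 1))) :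
    ac T b A m j (a • x) = a • ac T b A m j x := map_smul (act (A j)) _ _

theorem ac_zero (m j : ℕ) :
    ac T b A m j 0 = 0 := map_zero (act (A j))

theorem cl_ac (m j : ℕ) (x : Fin (b (j + 1)) → T.I (ad m (j + 1))) :
    cl (b j) (dl T (m + 1) j) (ac T b A m j x) =
      ac T b A (m + 1) j (cl (b (j + 1)) (dl T m (j + 1)) x) :=
  cl_act (A j) (dl T (m + 1) j) x

theorem ac_ac (hA : ∀ j, A j * A (j + 1) = 0) (m j : ℕ)
    (x : Fin (b (j + 2)) → T.I (ad m (j + 2))) :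
    ac T b A (m + 1) j (ac T b A m (j + 1) x) = 0 := by
  refine (act_act (V := T.I (ad (m + 2) j)) (A j) (A (j + 1)) x).trans ?_
  rw [hA]
  exact act_zero_matrix _

theorem cl_cl (m j : ℕ) (x : Fin (b j) → T.I (ad m j)) :
    cl (b j) (dl T (m + 1) j) (cl (b j) (dl T m j) x) = 0 := by
  funext s
  exact dl_dl T m j _

theorem sgn_sq (m : ℕ) {V : Type u} [AddCommGroup V] [Module R V] (x : V) :
    (-1 : R) ^ m • (-1 : R) ^ m • x = x := by
  rw [smul_smul, ← mul_pow]; simp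

theorem DD_DD (hA : ∀ j, A j * A (j + 1) = 0) (m : ℕ) (x : J T b m) :
    DD T b A (m + 1) (DD T b A m x) = 0 := by
  funext j
  rw [DD_apply, DD_apply, DD_apply, map_add, map_smul, cl_cl, cl_ac, ac_add, ac_smul, ac_ac _ _ _ hA]
  simp [pow_succ]

/-- residue is a cycle -/
theorem residue (hA : ∀ j, A j * A (j + 1) = 0) (m j : ℕ) (x : J T b (m + 1)) (w : J T b m)
    (h1 : DD T b A (m + 1) x j = 0) (h2 : DD T b A m w (j + 1) = x (j + 1)) :
    cl (b j) (dl T (m + 1) j) (x j - (-1 : R) ^ m • ac T b A m j (w (j + 1))) = 0 := by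
  rw [DD_apply, ← h2, DD_apply, ac_add, ac_smul, ac_ac _ _ _ hA] at h1
  rw [map_sub, map_smul, cl_ac]
  rw [pow_succ] at h1
  simp only [mul_neg, mul_one, neg_smul, smul_zero, add_zero] at h1
  rw [← sub_eq_add_neg] at h1
  exact h1

theorem chase (hA : ∀ j, A j * A (j + 1) = 0) (L : ℕ) (hL : ∀ j, L ≤ j → b j = 0) (m c : ℕ)
    (x : J T b (m + 1)) (hx : ∀ j, c ≤ j → DD T b A (m + 1) x j = 0)
    (hc : N < m + 1 + c) : ∃ w : J T b m, ∀ j, c ≤ j → DD T b A m w j = x j := by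
  classical
  have key : ∀ k, ∃ w : J T b m, ∀ j, c ≤ j → L ≤ j + k → DD T b A m w j = x j := by
    intro k
    induction k with
    | zero =>
      refine ⟨0, fun j _ hj => ?_⟩
      have : IsEmpty (Fin (b j)) := by rw [hL j hj]; infer_instance
      exact Subsingleton.elim _ _
    | succ k ih =>
      obtain ⟨w, hw⟩ := ih
      by_cases hk : c + k + 1 ≤ L
      · obtain ⟨j, rfl⟩ : ∃ j, L = j + (k + 1) := ⟨L - (k + 1), by omega⟩
        have hr := residue T b A hA m j x w (hx j (by omega)) (hw (j + 1) (by omega) (by omega))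
        have := fun s => dl_ex T m j (by omega) _ (congrFun hr s)
        choose v hv using this
        refine ⟨Function.update w j v, fun i hi hik => ?_⟩
        rcases eq_or_ne i j with rfl | hne
        · rw [DD_apply, Function.update_self, Function.update_of_ne (by omega)]
          have : cl (b i) (dl T m i) v = x i - (-1 : R) ^ m • ac T b A m i (w (i + 1)) :=
            funext hv
          rw [this, sub_add_cancel]
        · rw [DD_apply, Function.update_of_ne hne, Function.update_of_ne (by omega),
            ← DD_apply]
          exact hw i hi (by omega)
      · exact ⟨w, fun j hj hjk => hw j hj (by omega)⟩
  obtain ⟨w, hw⟩ := key L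
  exact ⟨w, fun j hj => hw j hj (by omega)⟩

theorem chase2 (hA : ∀ j, A j * A (j + 1) = 0) (L : ℕ) (hL : ∀ j, L ≤ j → b j = 0) (m c : ℕ)
    (x : J T b (m + 1)) (hx : ∀ j, c ≤ j → DD T b A (m + 1) x j = 0)
    (hc : m + 1 + c = N) (η : R →ₗ[R] T.I (ad (m + 1) c))
    (hη : ∀ y, dl T (m + 1) c y = 0 ↔ ∃ r, η r = y) :
    ∃ (w : J T b m) (f : Fin (b c) → R), (∀ j, c < j → DD T b A m w j = x j) ∧
      x c = cl (b c) η f + (-1 : R) ^ m • ac T b A m c (w (c + 1)) := by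
  obtain ⟨w, hw⟩ := chase T b A hA L hL m (c + 1) x (fun j hj => hx j (by omega)) (by omega)
  have hr := residue T b A hA m c x w (hx c le_rfl) (hw (c + 1) le_rfl)
  have := fun s => (hη _).1 (congrFun hr s)
  choose f hf using this
  refine ⟨w, f, fun j hj => hw j hj, ?_⟩
  have : cl (b c) η f = x c - (-1 : R) ^ m • ac T b A m c (w (c + 1)) := funext hf
  rw [this, sub_add_cancel]

end
end HolmAux

namespace HolmAux

section
variable {R : Type u} [CommRing R] {N : ℕ} (T : IRes R N)
  (b : ℕ → ℕ) (A : ∀ j, Matrix (Fin (b j)) (Fin (b (j + 1))) R)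

theorem low_eq (m j : ℕ) (h : m + j < N) (x y : Fin (b j) → T.I (ad m j)) : x = y := by
  have := ad_low T m j h
  exact Subsingleton.elim _ _

theorem cl_ac_eta (m j : ℕ) (η : R →ₗ[R] T.I (ad (m + 1) j)) (g : Fin (b (j + 1)) → R) :
    ac T b A m j (cl (b (j + 1)) η g) = cl (b j) η ((A j).mulVec g) :=
  (cl_act (A j) η g).symm

theorem exact_ne (hA : ∀ j, A j * A (j + 1) = 0) (L : ℕ) (hL : ∀ j, L ≤ j → b j = 0)
    (hex : ∀ j x, (A j).mulVec x = 0 → ∃ y, (A (j + 1)).mulVec y = x) (m : ℕ) (hm : m + 1 ≠ N)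
    (x : J T b (m + 1)) (hx : DD T b A (m + 1) x = 0) : ∃ w, DD T b A m w = x := by
  classical
  rcases lt_or_gt_of_ne hm with hlt | hgt
  · obtain ⟨i, hi⟩ : ∃ i, m + 1 + (i + 1) = N := ⟨N - (m + 1) - 1, by omega⟩
    obtain ⟨η, hinj, hη⟩ := exists_eta T (m + 1) (i + 1) hi
    obtain ⟨w, f, hw, hf⟩ := chase2 T b A hA L hL m (i + 1) x (fun j _ => congrFun hx j) hi η hη
    have h1 : ac T b A (m + 1) i (x (i + 1)) = 0 := by
      have := congrFun hx i
      rw [DD_apply, low_eq T b (m + 1) i (by omega) (x i) 0, map_zero, zero_add] at this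
      rw [← sgn_sq (R := R) (m + 1) (ac T b A (m + 1) i (x (i + 1))), this]
      simp
    have h2 : ac T b A (m + 1) i (cl (b (i + 1)) η f) = 0 := by
      rw [hf, ac_add, ac_smul, ac_ac _ _ _ hA, smul_zero, add_zero] at h1
      exact h1
    have h3 : (A i).mulVec f = 0 := by
      have h4 : cl (b i) η ((A i).mulVec f) = 0 := (cl_ac_eta T b A (m + 1) i η f).symm.trans h2
      exact cl_inj η hinj (h4.trans (map_zero (cl (b i) η)).symm)
    obtain ⟨g, rfl⟩ := hex i f h3
    obtain ⟨gg, hg1, hg2⟩ : ∃ gg : Fin (b (i + 2)) → T.I (ad m (i + 2)),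
        ac T b A m (i + 1) gg = cl (b (i + 1)) η ((A (i + 1)).mulVec g) ∧
        cl (b (i + 2)) (dl T m (i + 2)) gg = 0 :=
      ⟨cl (b (i + 2)) η g, cl_ac_eta T b A m (i + 1) η g, funext fun s => (hη _).2 ⟨g s, rfl⟩⟩
    refine ⟨Function.update w (i + 2) (w (i + 2) + (-1 : R) ^ m • gg), ?_⟩
    funext j
    rcases lt_trichotomy j (i + 1) with h | rfl | h
    · exact low_eq T b (m + 1) j (by omega) _ _
    · rw [DD_apply, Function.update_of_ne (by omega), Function.update_self, ac_add, ac_smul,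
        smul_add, sgn_sq, low_eq T b m (i + 1) (by omega) (w (i + 1)) 0, map_zero, zero_add, hf,
        hg1]
      exact add_comm _ _
    · rcases eq_or_ne j (i + 2) with rfl | hne
      · rw [← hw _ h, DD_apply, DD_apply, Function.update_self,
          Function.update_of_ne (by omega), map_add, map_smul, hg2, smul_zero, add_zero]
      · rw [← hw _ h, DD_apply, DD_apply, Function.update_of_ne hne,
          Function.update_of_ne (by omega)]
  · obtain ⟨w, hw⟩ := chase T b A hA L hL m 0 x (fun j _ => congrFun hx j) (by omega)
    exact ⟨w, funext fun j => hw j (Nat.zero_le j)⟩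

/-- inclusion of the zeroth term -/
def inc0 (m : ℕ) : (Fin (b 0) → T.I m) →ₗ[R] J T b m :=
  LinearMap.single R (fun j => Fin (b j) → T.I (ad m j)) 0

theorem inc0_zero (m : ℕ) (y : Fin (b 0) → T.I m) : inc0 T b m y 0 = y := by
  exact Pi.single_eq_same (M := fun j => Fin (b j) → T.I (ad m j)) 0 y

theorem inc0_ne (m j : ℕ) (y : Fin (b 0) → T.I m) (hj : j ≠ 0) : inc0 T b m y j = 0 := by
  exact Pi.single_eq_of_ne (M := fun j => Fin (b j) → T.I (ad m j)) hj y

theorem DD_inc0 (m : ℕ) (y : Fin (b 0) → T.I m) (hy : ∀ s, T.d m (y s) = 0) :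
    DD T b A m (inc0 T b m y) = 0 := by
  funext j
  rw [DD_apply, inc0_ne T b m (j + 1) y (by omega), ac_zero, smul_zero, add_zero]
  cases j with
  | zero => rw [inc0_zero]; exact funext hy
  | succ j => rw [inc0_ne T b m _ y (by omega), map_zero]; rfl

theorem hN_surj (hA : ∀ j, A j * A (j + 1) = 0) (L : ℕ) (hL : ∀ j, L ≤ j → b j = 0)
    (m : ℕ) (hm : m + 1 = N) (η : R →ₗ[R] T.I (m + 1))
    (hη : ∀ y, T.d (m + 1) y = 0 ↔ ∃ r, η r = y)
    (x : J T b (m + 1)) (hx : DD T b A (m + 1) x = 0) :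
    ∃ (f : Fin (b 0) → R) (w : J T b m), x = inc0 T b (m + 1) (cl (b 0) η f) + DD T b A m w := by
  obtain ⟨w, f, hw, hf⟩ := chase2 T b A hA L hL m 0 x (fun j _ => congrFun hx j) (by omega) η hη
  refine ⟨f, w, funext fun j => ?_⟩
  rw [Pi.add_apply]
  cases j with
  | zero =>
    rw [inc0_zero, hf, DD_apply, low_eq T b m 0 (by omega) (w 0) 0, map_zero]
    exact congrArg _ (zero_add _).symm
  | succ j => rw [inc0_ne T b (m + 1) _ _ (by omega), zero_add, hw _ (by omega)]

theorem hN_inj (hA : ∀ j, A j * A (j + 1) = 0) (L : ℕ) (hL : ∀ j, L ≤ j → b j = 0)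
    (m : ℕ) (hm : m + 2 = N) (η : R →ₗ[R] T.I (m + 2)) (hinj : Function.Injective η)
    (hη : ∀ y, T.d (m + 2) y = 0 ↔ ∃ r, η r = y)
    (f : Fin (b 0) → R) (w : J T b (m + 1))
    (h : inc0 T b (m + 2) (cl (b 0) η f) = DD T b A (m + 1) w) :
    ∃ g, (A 0).mulVec g = f := by
  obtain ⟨v, g, hv, hg⟩ := chase2 T b A hA L hL m 1 w (fun j hj => by
    rw [← h, inc0_ne T b _ _ _ (by omega)]) (by omega) η hη
  have h0 := congrFun h 0
  rw [inc0_zero, DD_apply, low_eq T b (m + 1) 0 (by omega) (w 0) 0, map_zero, zero_add, hg,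
    ac_add, ac_smul, ac_ac _ _ _ hA, smul_zero, add_zero] at h0
  refine ⟨(-1 : R) ^ (m + 1) • g, ?_⟩
  have h1 : cl (b 0) η f = cl (b 0) η ((-1 : R) ^ (m + 1) • (A 0).mulVec g) := by
    rw [map_smul]
    refine h0.trans ?_
    congr 1
    exact cl_ac_eta T b A (m + 1) 0 η g
  rw [Matrix.mulVec_smul]
  exact (cl_inj η hinj h1).symm

theorem hN_zero (m : ℕ) (η : R →ₗ[R] T.I (m + 1))
    (hη : ∀ y, T.d (m + 1) y = 0 ↔ ∃ r, η r = y) (g : Fin (b 1) → R) :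
    ∃ w, DD T b A m w = inc0 T b (m + 1) (cl (b 0) η ((A 0).mulVec g)) := by
  classical
  obtain ⟨gg, hg1, hg2⟩ : ∃ gg : Fin (b 1) → T.I (ad m 1),
      ac T b A m 0 gg = cl (b 0) η ((A 0).mulVec g) ∧
      cl (b 1) (dl T m 1) gg = 0 :=
    ⟨cl (b 1) η g, cl_ac_eta T b A m 0 η g, funext fun s => (hη _).2 ⟨g s, rfl⟩⟩
  generalize cl (b 0) η ((A 0).mulVec g) = F at *
  let w : J T b m := Function.update 0 1 ((-1 : R) ^ m • gg)
  refine ⟨w, funext fun j => ?_⟩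
  have h1 : w 1 = (-1 : R) ^ m • gg := Function.update_self _ _ _
  have h2 : ∀ j, j ≠ 1 → w j = 0 := fun j hj => Function.update_of_ne hj _ _
  rw [DD_apply]
  rcases j with _ | _ | j
  · rw [h2 0 (by omega), inc0_zero, map_zero, zero_add, h1, ac_smul, sgn_sq, hg1]
  · rw [inc0_ne T b _ _ _ (by omega), h2 (0 + 1 + 1) (by omega), ac_zero, smul_zero, add_zero,
      h1, map_smul, hg2, smul_zero]
  · rw [inc0_ne T b _ _ _ (by omega), h2 _ (by omega), h2 _ (by omega), ac_zero, smul_zero, map_zero,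
      add_zero]

end
end HolmAux

namespace HolmAux

section cores
variable (R : Type u) [CommRing R]

/-- an injective module containing `C` -/
noncomputable def UU (C : ModuleCat.{u} R) : ModuleCat.{u} R := Injective.under C

/-- the embedding -/
noncomputable def io (C : ModuleCat.{u} R) : C →ₗ[R] UU R C := (Injective.ι C).hom

theorem io_inj (C : ModuleCat.{u} R) : Function.Injective (io R C) :=
  (ModuleCat.mono_iff_injective (Injective.ι C)).1 inferInstance

theorem UU_inj (C : ModuleCat.{u} R) : Module.Injective R (UU R C) :=
  Module.injective_module_of_injective_object R (UU R C)
    (inj := inferInstanceAs (Injective (Injective.under C)))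

/-- cosyzygies of `R` -/
noncomputable def CC : ℕ → ModuleCat.{u} R
  | 0 => ModuleCat.of R R
  | n + 1 => ModuleCat.of R (UU R (CC n) ⧸ LinearMap.range (io R (CC n)))

/-- projection to the next cosyzygy -/
noncomputable def pr (n : ℕ) : UU R (CC R n) →ₗ[R] CC R (n + 1) :=
  (LinearMap.range (io R (CC R n))).mkQ

theorem CC_ses (n : ℕ) : IsShortExact R (io R (CC R n)) (pr R n) :=
  ⟨io_inj R _, Submodule.mkQ_surjective _, LinearMap.exact_map_mkQ_range _⟩

/-- unshifted resolution -/
noncomputable def iRes0 : IRes R 0 where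
  I i := UU R (CC R i)
  d i := io R (CC R (i + 1)) ∘ₗ pr R i
  e := io R (CC R 0)
  inj i := UU_inj R _
  low i h := by omega
  einj := io_inj R _
  ker y := by
    rw [LinearMap.comp_apply]
    have := (CC_ses R 0).2.2 y
    refine Iff.trans ?_ this
    exact ⟨fun h => io_inj R _ (h.trans (map_zero _).symm), fun h => by rw [h, map_zero]⟩
  dd i y := by
    have := (CC_ses R (i + 1)).2.2.apply_apply_eq_zero (pr R i y)
    simp [this]
  ex i _ y hy := by
    have h1 : pr R (i + 1) y = 0 := io_inj R _ (hy.trans (map_zero _).symm)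
    obtain ⟨c, rfl⟩ := ((CC_ses R (i + 1)).2.2 y).1 h1
    obtain ⟨z, rfl⟩ := (CC_ses R i).2.1 c
    exact ⟨z, rfl⟩

/-- shift once -/
noncomputable def IRes.shift {N : ℕ} (T : IRes R N) : IRes R (N + 1) where
  I i := Nat.casesOn i (ModuleCat.of R PUnit) T.I
  d i := Nat.casesOn i 0 T.d
  e := T.e
  inj i := by
    cases i with
    | zero =>
      exact ⟨fun X Y _ _ _ _ f hf g => ⟨0, fun x => Subsingleton.elim (α := PUnit) _ _⟩⟩
    | succ i => exact T.inj i
  low i h := by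
    cases i with
    | zero => exact inferInstanceAs (Subsingleton PUnit)
    | succ i => exact T.low i (by omega)
  einj := T.einj
  ker := T.ker
  dd i := by
    cases i with
    | zero => exact fun y => map_zero (T.d 0)
    | succ i => exact T.dd i
  ex i h := by
    cases i with
    | zero =>
      intro y hy
      have := T.low 0 (by omega)
      exact ⟨0, Subsingleton.elim (α := T.I 0) _ _⟩
    | succ i => exact T.ex i (by omega)

/-- shift many times -/
noncomputable def shiftN : ∀ N : ℕ, IRes R N
  | 0 => iRes0 R
  | N + 1 => (shiftN N).shift R

/-- socle cycles are boundaries of socle elements -/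
def SocEx [IsLocalRing R] {N : ℕ} (T : IRes R N) (i : ℕ) : Prop :=
  ∀ y : T.I (i + 1), T.d (i + 1) y = 0 → (∀ a ∈ IsLocalRing.maximalIdeal R, a • y = 0) →
    ∃ z : T.I i, T.d i z = y ∧ ∀ a ∈ IsLocalRing.maximalIdeal R, a • z = 0

theorem socEx_shiftN [IsLocalRing R] (N i : ℕ) (h : SocEx R (shiftN R N) (i + N)) :
    SocEx R (iRes0 R) i := by
  induction N with
  | zero => exact h
  | succ N ih => exact ih h

theorem inj_lt {X : Type u} [AddCommGroup X] [Module R X] (h : Module.Injective R X) :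
    HasInjectiveDimensionLT (ModuleCat.of R X) 1 := by
  have : Injective (ModuleCat.of R X) := Module.injective_object_of_injective_module R X
  infer_instance

theorem lt_inj {X : Type u} [AddCommGroup X] [Module R X]
    (h : HasInjectiveDimensionLT (ModuleCat.of R X) 1) : Module.Injective R X := by
  have : Injective (ModuleCat.of R X) := injective_iff_hasInjectiveDimensionLT_one.2 h
  exact Module.injective_module_of_injective_object R X

theorem injdim_lt (n : ℕ) : ∀ M : ModuleCat.{u} R, InjdimLE R n M →
    HasInjectiveDimensionLT M (n + 1) := by
  induction n with
  | zero => exact fun M h => inj_lt R h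
  | succ n ih =>
    rintro M ⟨I, C, f, g, hI, hfg, hC⟩
    have h1 := inj_lt R hI
    exact (sc_shortExact f g hfg).hasInjectiveDimensionLT_X₁ (n + 1) (ih C hC)
      (hasInjectiveDimensionLT_of_ge _ 1 _ (by omega))

end cores

section
variable {R : Type u} [CommRing R] {N : ℕ} (T : IRes R N)
  (b : ℕ → ℕ) (A : ∀ j, Matrix (Fin (b j)) (Fin (b (j + 1))) R)

/-- cycles -/
abbrev ZZ (m : ℕ) : Submodule R (J T b m) := LinearMap.ker (DD T b A m)

theorem J_inj (m : ℕ) : Module.Injective R (J T b m) := by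
  have := T.inj
  infer_instance

/-- differential to cycles -/
def DZ (hA : ∀ j, A j * A (j + 1) = 0) (m : ℕ) : J T b m →ₗ[R] ZZ T b A (m + 1) :=
  (DD T b A m).codRestrict _ (fun x => DD_DD T b A hA m x)

theorem DZ_ses (hA : ∀ j, A j * A (j + 1) = 0) (m : ℕ) :
    IsShortExact R (A := ZZ T b A m) (B := J T b m) (C := LinearMap.range (DZ T b A hA m))
      (ZZ T b A m).subtype (DZ T b A hA m).rangeRestrict := by
  refine ⟨Submodule.injective_subtype _, LinearMap.surjective_rangeRestrict _, fun x => ?_⟩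
  have : x ∈ Set.range (ZZ T b A m).subtype ↔ DD T b A m x = 0 := by simp
  rw [this]
  constructor
  · intro h
    exact congrArg (fun z => z.1.1) h
  · intro h
    exact Subtype.ext (Subtype.ext h)

theorem range_lt (hA : ∀ j, A j * A (j + 1) = 0) (m n : ℕ)
    (h : HasInjectiveDimensionLT (ModuleCat.of R (ZZ T b A m)) (n + 2)) :
    HasInjectiveDimensionLT (ModuleCat.of R (LinearMap.range (DZ T b A hA m))) (n + 1) := by
  have h1 := inj_lt R (J_inj T b m)
  exact (sc_shortExact _ _ (DZ_ses T b A hA m)).hasInjectiveDimensionLT_X₃ (n + 1)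
      (hasInjectiveDimensionLT_of_ge _ 1 _ (by omega)) h

theorem lt_of_equiv {X Y : Type u} [AddCommGroup X] [Module R X] [AddCommGroup Y] [Module R Y]
    (e : X ≃ₗ[R] Y) (n : ℕ) (h : HasInjectiveDimensionLT (ModuleCat.of R X) n) :
    HasInjectiveDimensionLT (ModuleCat.of R Y) n :=
  hasInjectiveDimensionLT_of_iso e.toModuleIso n

theorem Z_lt (hA : ∀ j, A j * A (j + 1) = 0) (L : ℕ) (hL : ∀ j, L ≤ j → b j = 0)
    (hex : ∀ j x, (A j).mulVec x = 0 → ∃ y, (A (j + 1)).mulVec y = x) (m n : ℕ) (hm : m + 1 ≠ N)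
    (h : HasInjectiveDimensionLT (ModuleCat.of R (ZZ T b A m)) (n + 2)) :
    HasInjectiveDimensionLT (ModuleCat.of R (ZZ T b A (m + 1))) (n + 1) := by
  refine lt_of_equiv (LinearEquiv.ofTop _ ?_) _ (range_lt T b A hA m n h)
  rw [LinearMap.range_eq_top]
  rintro ⟨x, hx⟩
  obtain ⟨w, hw⟩ := exact_ne T b A hA L hL hex m hm x hx
  exact ⟨w, Subtype.ext hw⟩

theorem Z_low (hA : ∀ j, A j * A (j + 1) = 0) (L : ℕ) (hL : ∀ j, L ≤ j → b j = 0) (hLN : L ≤ N)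
    (hex : ∀ j x, (A j).mulVec x = 0 → ∃ y, (A (j + 1)).mulVec y = x) (m : ℕ) (hm : m < N) :
    HasInjectiveDimensionLT (ModuleCat.of R (ZZ T b A m)) 1 := by
  induction m with
  | zero =>
    have : Subsingleton (J T b 0) := ⟨fun x y => funext fun j => by
      by_cases hj : L ≤ j
      · have : IsEmpty (Fin (b j)) := by rw [hL j hj]; infer_instance
        exact Subsingleton.elim _ _
      · exact low_eq T b 0 j (by omega) _ _⟩
    exact inj_lt R ⟨fun X Y _ _ _ _ f hf g => ⟨0, fun x => Subsingleton.elim _ _⟩⟩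
  | succ m ih =>
    have := ih (by omega)
    exact Z_lt T b A hA L hL hex m 0 (by omega) (hasInjectiveDimensionLT_of_ge _ 1 _ (by omega))

theorem Z_N {M : Type u} [AddCommGroup M] [Module R M] (q : (Fin (b 0) → R) →ₗ[R] M)
    (hq : Function.Surjective q) (hq0 : ∀ x, q x = 0 ↔ ∃ y, (A 0).mulVec y = x)
    (hA : ∀ j, A j * A (j + 1) = 0) (L : ℕ) (hL : ∀ j, L ≤ j → b j = 0) (hLN : L ≤ N)
    (hex : ∀ j x, (A j).mulVec x = 0 → ∃ y, (A (j + 1)).mulVec y = x) (m : ℕ) (hm : m + 2 = N)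
    (c : ℕ) (hM : HasInjectiveDimensionLT (ModuleCat.of R M) (c + 1)) :
    HasInjectiveDimensionLT (ModuleCat.of R (ZZ T b A (m + 2))) (c + 1) := by
  have h1 := Z_low T b A hA L hL hLN hex (m + 1) (by omega)
  have h2 := range_lt T b A hA (m + 1) 0 (hasInjectiveDimensionLT_of_ge _ 1 _ (by omega))
  obtain ⟨η, hinj, hη⟩ := exists_eta T (m + 2) 0 hm
  let B := LinearMap.range (DZ T b A hA (m + 1))
  let ι : (Fin (b 0) → R) →ₗ[R] ZZ T b A (m + 2) :=
    (inc0 T b (m + 2) ∘ₗ cl (b 0) η).codRestrict _ (fun f =>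
      DD_inc0 T b A (m + 2) _ (fun s => (hη _).2 ⟨f s, rfl⟩))
  let θ := B.mkQ ∘ₗ ι
  have hθ : ∀ f, θ f = 0 ↔ q f = 0 := by
    intro f
    refine (Submodule.Quotient.mk_eq_zero B).trans ?_
    rw [hq0]
    constructor
    · rintro ⟨w, hw⟩
      exact hN_inj T b A hA L hL m hm η hinj hη f w (congrArg Subtype.val hw).symm
    · rintro ⟨g, rfl⟩
      obtain ⟨w, hw⟩ := hN_zero T b A (m + 1) η hη g
      exact ⟨w, Subtype.ext hw⟩
  have hθs : Function.Surjective θ := by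
    intro y
    obtain ⟨⟨x, hx⟩, rfl⟩ := B.mkQ_surjective y
    obtain ⟨f, w, hfw⟩ := hN_surj T b A hA L hL (m + 1) hm η hη x hx
    refine ⟨f, ?_⟩
    refine (Submodule.Quotient.eq B).2 ⟨-w, Subtype.ext ?_⟩
    change DD T b A (m + 1) (-w) = inc0 T b (m + 1 + 1) (cl (b 0) η f) - x
    rw [hfw, map_neg]
    exact (sub_add_cancel_left _ _).symm
  obtain ⟨r, hr⟩ := exists_factor q hq θ (fun x hx => (hθ x).2 hx)
  have hrb : Function.Bijective r := by
    constructor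
    · rw [← LinearMap.ker_eq_bot, LinearMap.ker_eq_bot']
      intro y hy
      obtain ⟨f, rfl⟩ := hq y
      rw [hr] at hy
      exact (hθ f).1 hy
    · intro y
      obtain ⟨f, rfl⟩ := hθs y
      exact ⟨q f, hr f⟩
  have h3 : HasInjectiveDimensionLT (ModuleCat.of R (ZZ T b A (m + 2) ⧸ B)) (c + 1) :=
    lt_of_equiv (LinearEquiv.ofBijective r hrb) _ hM
  have hse : IsShortExact R (A := B) (C := ZZ T b A (m + 2) ⧸ B) B.subtype B.mkQ :=
    ⟨B.injective_subtype, B.mkQ_surjective, LinearMap.exact_subtype_mkQ B⟩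
  exact (sc_shortExact _ _ hse).hasInjectiveDimensionLT_X₂ (c + 1)
    (hasInjectiveDimensionLT_of_ge _ 1 _ (by omega)) h3

theorem socEx_of [IsLocalRing R] {M : Type u} [AddCommGroup M] [Module R M] [Nontrivial M]
    {L : ℕ} (S : MinRes R L M) (T : IRes R (L + 2)) (c : ℕ)
    (hM : HasInjectiveDimensionLT (ModuleCat.of R M) (c + 1)) (i : ℕ) (hi : L + 2 + c ≤ i) :
    SocEx R T i := by
  have hA : ∀ j, S.A j * S.A (j + 1) = 0 := by
    intro j
    apply Matrix.ext_of_mulVec_single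
    intro t
    rw [← Matrix.mulVec_mulVec, Matrix.zero_mulVec]
    exact (S.ex j _).2 ⟨_, rfl⟩
  have hex : ∀ j x, (S.A j).mulVec x = 0 → ∃ y, (S.A (j + 1)).mulVec y = x :=
    fun j x => (S.ex j x).1
  have hZ : ∀ k, HasInjectiveDimensionLT (ModuleCat.of R (ZZ T S.b S.A (L + 2 + k))) (c - k + 1) := by
    intro k
    induction k with
    | zero => exact Z_N T S.b S.A S.q S.surj S.ex0 hA L S.bzero (by omega) hex L rfl c hM
    | succ k ih =>
      exact Z_lt T S.b S.A hA L S.bzero hex (L + 2 + k) (c - (k + 1)) (by omega)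
        (hasInjectiveDimensionLT_of_ge _ (c - k + 1) _ (by omega))
  have hZi : Module.Injective R (ZZ T S.b S.A i) := by
    obtain ⟨k, rfl⟩ : ∃ k, i = L + 2 + k := ⟨i - (L + 2), by omega⟩
    have := hZ k
    rw [Nat.sub_eq_zero_of_le (by omega)] at this
    exact lt_inj R this
  intro y hy hsoc
  have hb : 0 < S.b 0 := by
    by_contra h
    have h0 : S.b 0 = 0 := by omega
    have : IsEmpty (Fin (S.b 0)) := by rw [h0]; infer_instance
    exact not_subsingleton M S.surj.subsingleton
  let yy : Fin (S.b 0) → T.I (i + 1) := fun _ => y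
  let x := inc0 T S.b (i + 1) yy
  have hxs : ∀ a ∈ IsLocalRing.maximalIdeal R, a • x = 0 := by
    intro a ha
    have : a • yy = 0 := funext fun _ => hsoc a ha
    rw [← map_smul, this, map_zero]
  obtain ⟨w, hw⟩ := exact_ne T S.b S.A hA L S.bzero hex i (by omega) x
    (DD_inc0 T S.b S.A (i + 1) yy (fun _ => hy))
  obtain ⟨r, hr⟩ := hZi.out (ZZ T S.b S.A i).subtype (Submodule.injective_subtype _) LinearMap.id
  let z : J T S.b i := w - r w
  have hz : ∀ a ∈ IsLocalRing.maximalIdeal R, a • z = 0 := by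
    intro a ha
    have h1 : a • w ∈ ZZ T S.b S.A i := by
      rw [LinearMap.mem_ker, map_smul, hw, hxs a ha]
    have h2 := congrArg Subtype.val (hr ⟨a • w, h1⟩)
    have h3 : a • (r w : J T S.b i) = a • w := by
      rw [← Submodule.coe_smul, ← map_smul]
      exact h2
    rw [smul_sub, h3, sub_self]
  have hDz : DD T S.b S.A i z = x := by
    have : DD T S.b S.A i (r w : J T S.b i) = 0 := (r w).2
    rw [map_sub, this, sub_zero, hw]
  refine ⟨z 0 ⟨0, hb⟩, ?_, fun a ha => congrFun (congrFun (hz a ha) 0) ⟨0, hb⟩⟩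
  have h0 := congrFun hDz 0
  have hac : ac T S.b S.A i 0 (z 1) = 0 := by
    funext s
    refine (act_apply (V := T.I (ad (i + 1) 0)) (S.A 0) (z 1) s).trans ?_
    refine Finset.sum_eq_zero fun t _ => ?_
    exact congrFun (congrFun (hz _ (S.mem 0 s t)) 1) t
  rw [DD_apply] at h0
  have h0' := h0.symm.trans (congrArg (fun v => cl (S.b 0) (dl T i 0) (z 0) + (-1 : R) ^ i • v) hac)
  have hx0 : x 0 = yy := inc0_zero T S.b (i + 1) yy
  rw [smul_zero, add_zero, hx0] at h0'
  exact (congrFun h0' ⟨0, hb⟩).symm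

end
end HolmAux

namespace HolmAux

section
variable (R : Type u) [CommRing R]

theorem ext1_zero [IsLocalRing R] (i : ℕ) (h : SocEx R (iRes0 R) i) :
    EV R (R ⧸ IsLocalRing.maximalIdeal R) (CC R i) 1 := by
  have hS := sc_shortExact _ _ (CC_ses R i)
  have := UU_inj R (CC R i)
  have hU : Injective (ModuleCat.of R (UU R (CC R i))) :=
    Module.injective_object_of_injective_module R (UU R (CC R i))
  refine subsingleton_of_forall_eq 0 fun α => ?_
  obtain ⟨β', hβ⟩ := Abelian.Ext.covariant_sequence_exact₁ _ hS (n₀ := 0) α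
    (Abelian.Ext.eq_zero_of_injective _) rfl
  obtain ⟨β, rfl⟩ := Abelian.Ext.homEquiv₀.symm.surjective β'
  let b : (R ⧸ IsLocalRing.maximalIdeal R) →ₗ[R] CC R (i + 1) := β.hom
  let y : CC R (i + 1) := b (Submodule.Quotient.mk 1)
  have hy : ∀ a ∈ IsLocalRing.maximalIdeal R, a • y = 0 := by
    intro a ha
    have h0 : a • (Submodule.Quotient.mk 1 : R ⧸ IsLocalRing.maximalIdeal R) = 0 := by
      rw [← Submodule.Quotient.mk_smul]
      exact (Submodule.Quotient.mk_eq_zero _).2 (by simpa using ha)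
    have h1 : b (a • Submodule.Quotient.mk 1) = a • y := b.map_smul _ _
    rw [← h1, h0, map_zero]
  obtain ⟨z, hz, hz0⟩ := h (io R (CC R (i + 1)) y) (by
      change io R _ (pr R (i + 1) (io R _ y)) = 0
      rw [(CC_ses R (i + 1)).2.2.apply_apply_eq_zero, map_zero])
    (fun a ha => by
      have : a • io R (CC R (i + 1)) y = 0 := by rw [← map_smul, hy a ha, map_zero]
      exact this)
  have hz' : pr R i z = y := io_inj R _ hz
  let c : (R ⧸ IsLocalRing.maximalIdeal R) →ₗ[R] UU R (CC R i) :=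
    Submodule.liftQ _ (LinearMap.toSpanSingleton R (UU R (CC R i)) z) (fun a ha => hz0 a ha)
  have hc : ModuleCat.ofHom c ≫ (sc _ _ (CC_ses R i)).g = β := by
    refine ModuleCat.hom_ext (LinearMap.ext fun x => ?_)
    obtain ⟨r, rfl⟩ := Submodule.Quotient.mk_surjective _ x
    have h1 : c (Submodule.Quotient.mk r) = r • z := rfl
    have h2 : b (Submodule.Quotient.mk r) = r • y := by
      have h3 : b (r • Submodule.Quotient.mk 1) = r • y := b.map_smul _ _
      rw [← h3, ← Submodule.Quotient.mk_smul, smul_eq_mul, mul_one]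
    change pr R i (c (Submodule.Quotient.mk r)) = b (Submodule.Quotient.mk r)
    rw [h1, h2, ← hz']
    exact (pr R i).map_smul r z
  rw [← hβ, ← hc, Abelian.Ext.homEquiv₀_symm_apply, ← Abelian.Ext.mk₀_comp_mk₀,
    Abelian.Ext.comp_assoc_of_second_deg_zero, hS.comp_extClass, Abelian.Ext.comp_zero]

theorem shift_down (T : Type u) [AddCommGroup T] [Module R T] (i j : ℕ)
    (h : EV R T (CC R (i + 1)) (j + 1)) : EV R T (CC R i) (j + 2) := by
  have hS := sc_shortExact _ _ (CC_ses R i)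
  have := UU_inj R (CC R i)
  have hU : Injective (ModuleCat.of R (UU R (CC R i))) :=
    Module.injective_object_of_injective_module R (UU R (CC R i))
  refine subsingleton_of_forall_eq 0 fun α => ?_
  obtain ⟨β, rfl⟩ := Abelian.Ext.covariant_sequence_exact₁ _ hS (n₀ := j + 1) α
    (Abelian.Ext.eq_zero_of_injective _) rfl
  rw [h.elim β 0, Abelian.Ext.zero_comp]

theorem shift_up (T : Type u) [AddCommGroup T] [Module R T] (i j : ℕ)
    (h : EV R T (CC R i) (j + 2)) : EV R T (CC R (i + 1)) (j + 1) := by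
  have hS := sc_shortExact _ _ (CC_ses R i)
  have := UU_inj R (CC R i)
  have hU : Injective (ModuleCat.of R (UU R (CC R i))) :=
    Module.injective_object_of_injective_module R (UU R (CC R i))
  refine subsingleton_of_forall_eq 0 fun α => ?_
  obtain ⟨β, rfl⟩ := Abelian.Ext.covariant_sequence_exact₃ _ hS (n₁ := j + 2) α rfl (h.elim _ _)
  rw [Abelian.Ext.eq_zero_of_injective β, Abelian.Ext.zero_comp]

theorem ev_down (T : Type u) [AddCommGroup T] [Module R T] (i j : ℕ)
    (h : EV R T (CC R i) (j + 1)) : EV R T R (i + j + 1) := by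
  induction i generalizing j with
  | zero => rw [Nat.zero_add]; exact h
  | succ i ih =>
    have := ih (j + 1) (shift_down R T i j h)
    rw [show i + 1 + j + 1 = i + (j + 1) + 1 by omega]
    exact this

theorem ev_up (T : Type u) [AddCommGroup T] [Module R T] (i j : ℕ)
    (h : EV R T R (i + j + 1)) : EV R T (CC R i) (j + 1) := by
  induction i generalizing j with
  | zero => rw [Nat.zero_add] at h; exact h
  | succ i ih =>
    apply shift_up R T i j
    apply ih (j + 1)
    rw [show i + (j + 1) + 1 = i + 1 + j + 1 by omega]
    exact h

theorem ev_mid {A B C : Type u} [AddCommGroup A] [Module R A]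
    [AddCommGroup B] [Module R B] [AddCommGroup C] [Module R C]
    (f : A →ₗ[R] B) (g : B →ₗ[R] C) (h : IsShortExact R f g) (Y : Type u) [AddCommGroup Y]
    [Module R Y] (n : ℕ) (hA : EV R A Y n) (hC : EV R C Y n) : EV R B Y n := by
  refine subsingleton_of_forall_eq 0 fun α => ?_
  obtain ⟨β, rfl⟩ := Abelian.Ext.contravariant_sequence_exact₂ (sc_shortExact f g h) _ α
    (hA.elim _ _)
  rw [hC.elim β 0, Abelian.Ext.comp_zero]

theorem ev_zero (A Y : Type u) [AddCommGroup A] [Module R A] [Subsingleton A] [AddCommGroup Y]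
    [Module R Y] (n : ℕ) : EV R A Y n := by
  refine subsingleton_of_forall_eq 0 fun α => ?_
  have h0 : 𝟙 (ModuleCat.of R A) = 0 := by
    ext x
    exact Subsingleton.elim (α := A) _ _
  rw [← Abelian.Ext.mk₀_id_comp α, h0, Abelian.Ext.mk₀_zero, Abelian.Ext.zero_comp]

theorem ev_equiv {A B : Type u} [AddCommGroup A] [Module R A]
    [AddCommGroup B] [Module R B] (e : A ≃ₗ[R] B) (Y : Type u) [AddCommGroup Y]
    [Module R Y] (n : ℕ) (hA : EV R A Y n) : EV R B Y n :=
  ev_mid R (C := PUnit.{u+1}) e.toLinearMap 0 ⟨e.injective, Function.surjective_to_subsingleton _,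
    (e.toLinearMap.exact_zero_iff_surjective _).2 e.surjective⟩ Y n hA (ev_zero R _ _ _)

theorem ev_nak [IsNoetherianRing R] [IsLocalRing R] (T Y : Type u) [AddCommGroup T] [Module R T]
    [Module.Finite R T] [AddCommGroup Y] [Module R Y] [Module.Finite R Y] (x : R)
    (hx : x ∈ IsLocalRing.maximalIdeal R) (C : Type u) [AddCommGroup C] [Module R C]
    (g : T →ₗ[R] C) (h : IsShortExact R (x • LinearMap.id : T →ₗ[R] T) g) (n : ℕ)
    (hC : EV R C Y (n + 1)) : EV R T Y n := by
  have hfin : Module.Finite R (Abelian.Ext.{u} (ModuleCat.of R T) (ModuleCat.of R Y) n) :=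
    ModuleCat.finite_ext _ _ _ n
  have htop : (⊤ : Submodule R (Abelian.Ext.{u} (ModuleCat.of R T) (ModuleCat.of R Y) n)) = ⊥ := by
    refine Submodule.eq_bot_of_le_smul_of_le_jacobson_bot (Ideal.span {x}) _ hfin.fg_top ?_ ?_
    · intro α _
      obtain ⟨β, hβ⟩ := Abelian.Ext.contravariant_sequence_exact₁ (sc_shortExact _ _ h)
        (ModuleCat.of R Y) (n₁ := n + 1) α (by omega) (hC.elim _ _)
      have : (sc _ _ h).f = x • 𝟙 (ModuleCat.of R T) := rfl
      rw [this, Abelian.Ext.mk₀_smul, Abelian.Ext.smul_comp, Abelian.Ext.mk₀_id_comp] at hβ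
      rw [← hβ]
      exact Submodule.smul_mem_smul (Ideal.mem_span_singleton_self x) trivial
    · rw [IsLocalRing.jacobson_eq_maximalIdeal _ bot_ne_top]
      rwa [Ideal.span_singleton_le_iff_mem]
  refine subsingleton_of_forall_eq 0 fun α => ?_
  have : α ∈ (⊤ : Submodule R (Abelian.Ext.{u} (ModuleCat.of R T) (ModuleCat.of R Y) n)) := trivial
  rw [htop] at this
  exact this

theorem ev_all [IsNoetherianRing R] [IsLocalRing R] (N : ℕ)
    (hk : ∀ i, N ≤ i → EV R (R ⧸ IsLocalRing.maximalIdeal R) R i) (a : Ideal R) :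
    ∀ (T : Type u) [AddCommGroup T] [Module R T] [Module.Finite R T],
      a ≤ Module.annihilator R T → ∀ i, N ≤ i → EV R T R i := by
  induction a using IsWellFounded.induction (fun a b : Ideal R => a > b) with
  | ind a ih =>
  intro T _ _ hT
  induction hT using IsNoetherianRing.induction_on_isQuotientEquivQuotientPrime R with
  | subsingleton T => intro _ i _; exact ev_zero R _ _ _
  | exact A B C f g hf hg hfg hA hC =>
    intro ha i hi
    exact ev_mid R f g ⟨hf, hg, hfg⟩ R i
      (hA (ha.trans (f.annihilator_le_of_injective hf)) i hi)
      (hC (ha.trans (g.annihilator_le_of_surjective hg)) i hi)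
  | quotient T p e =>
    intro ha i hi
    rw [e.annihilator_eq, Ideal.annihilator_quotient] at ha
    refine ev_equiv R e.symm R i ?_
    have hp := p.2
    by_cases hpm : p.1 = IsLocalRing.maximalIdeal R
    · rw [hpm]; exact hk i hi
    obtain ⟨x, hxm, hxp⟩ := SetLike.exists_of_lt
      (lt_of_le_of_ne (IsLocalRing.le_maximalIdeal hp.ne_top) hpm)
    let f : (R ⧸ p.1) →ₗ[R] (R ⧸ p.1) := x • LinearMap.id
    refine ev_nak R (R ⧸ p.1) R x hxm ((R ⧸ p.1) ⧸ LinearMap.range f) (LinearMap.range f).mkQ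
      ⟨?_, Submodule.mkQ_surjective _, LinearMap.exact_map_mkQ_range f⟩ i ?_
    · rw [injective_iff_map_eq_zero]
      intro t ht
      obtain ⟨r, rfl⟩ := Ideal.Quotient.mk_surjective t
      have h1 : Ideal.Quotient.mk p.1 (x * r) = 0 := ht
      rw [Ideal.Quotient.eq_zero_iff_mem] at h1 ⊢
      exact (hp.mem_or_mem h1).resolve_left hxp
    · refine ih (p.1 ⊔ Ideal.span {x}) ?_ _ ?_ (i + 1) (by omega)
      · refine lt_of_le_of_lt ha (lt_of_le_of_ne le_sup_left fun h => hxp ?_)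
        change x ∈ p.1
        rw [h]
        exact Ideal.mem_sup_right (Ideal.mem_span_singleton_self x)
      · refine sup_le ?_ ?_
        · refine le_trans ?_ (LinearMap.annihilator_le_of_surjective (LinearMap.range f).mkQ
            (Submodule.mkQ_surjective _))
          rw [Ideal.annihilator_quotient]
        · rw [Ideal.span_singleton_le_iff_mem, Module.mem_annihilator]
          intro t
          obtain ⟨s, rfl⟩ := Submodule.mkQ_surjective _ t
          rw [← map_smul]
          exact (Submodule.Quotient.mk_eq_zero _).2 ⟨s, rfl⟩

theorem inj_of_ev (Q : Type u) [AddCommGroup Q] [Module R Q]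
    (h : ∀ a : Ideal R, EV R (R ⧸ a) Q 1) : Module.Injective R Q := by
  apply Module.Baer.injective
  intro a φ
  obtain ⟨ψ, hψ⟩ := e1_of_ev R _ _ (h a) a R (Submodule.subtype a) (Submodule.mkQ a)
    ⟨Submodule.injective_subtype _, Submodule.mkQ_surjective _,
      LinearMap.exact_subtype_mkQ a⟩ φ
  exact ⟨ψ, fun x hx => LinearMap.congr_fun hψ ⟨x, hx⟩⟩

theorem injdim_CC (n k : ℕ) (h : Module.Injective R (CC R (k + n))) :
    InjdimLE R n (CC R k) := by
  induction n generalizing k with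
  | zero => exact h
  | succ n ih =>
    refine ⟨UU R (CC R k), CC R (k + 1), io R _, pr R k, UU_inj R _, CC_ses R k, ih (k + 1) ?_⟩
    rw [show k + 1 + n = k + (n + 1) by omega]
    exact h

theorem main [IsNoetherianRing R] [IsLocalRing R]
    (M : Type u) [AddCommGroup M] [Module R M] [Module.Finite R M] [Nontrivial M]
    (hinj : ∃ n : ℕ, InjdimLE R n (ModuleCat.of R M))
    (hG : ∃ n : ℕ, GdimLE R n (ModuleCat.of R M)) : IsGorensteinRing R := by
  obtain ⟨L, hL⟩ := pd_finite R (ModuleCat.of R M) hinj hG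
  obtain ⟨S⟩ := exists_minRes R L M hL
  obtain ⟨c, hc⟩ := hinj
  have hs : ∀ i, c ≤ i → SocEx R (iRes0 R) i := fun i hi =>
    socEx_shiftN R (L + 2) i (socEx_of S (shiftN R (L + 2)) c (injdim_lt R c _ hc) _ (by omega))
  have hk : ∀ i, c + 1 ≤ i → EV R (R ⧸ IsLocalRing.maximalIdeal R) R i := by
    intro i hi
    obtain ⟨j, rfl⟩ : ∃ j, i = j + 0 + 1 := ⟨i - 1, by omega⟩
    exact ev_down R _ j 0 (ext1_zero R j (hs j (by omega)))
  refine ⟨c, injdim_CC R c 0 ?_⟩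
  rw [Nat.zero_add]
  exact inj_of_ev R _ fun a => ev_up R _ c 0 (ev_all R (c + 1) hk ⊥ _ bot_le _ (by omega))

end
end HolmAux

theorem stmt1 (R : Type u) [CommRing R] [IsNoetherianRing R] [IsLocalRing R]
    (M : Type u) [AddCommGroup M] [Module R M] [Module.Finite R M] [Nontrivial M]
    (hinj : ∃ n : ℕ, InjdimLE R n (ModuleCat.of R M))
    (hG : ∃ n : ℕ, GdimLE R n (ModuleCat.of R M)) :
    IsGorensteinRing R := by
  exact HolmAux.main R M hinj hG
end

section
/- Let R be a commutative Noetherian local ring and let M be a nonzero finitely generated R-module with finite injective dimension. Then the reducing Gorenstein dimension of M equals the reducing projective dimension of M (as elements of ℕ ∪ {∞}). -/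
open CategoryTheory Pointwise

universe u

variable (R : Type u) [CommRing R]

namespace RedInv

open CategoryTheory Abelian

variable {R}

def EV (R : Type u) [CommRing R] (X Y : Type u) [AddCommGroup X] [Module R X]
    [AddCommGroup Y] [Module R Y] (n : ℕ) : Prop :=
  ∀ e : Abelian.Ext (ModuleCat.of R X) (ModuleCat.of R Y) n, e = 0

lemma extVanish_iff (X Y : Type u) [AddCommGroup X] [Module R X]
    [AddCommGroup Y] [Module R Y] (n : ℕ) : ExtVanish R X Y (n+1) ↔ EV R X Y (n+1) := by
  let P := projectiveResolution (ModuleCat.of R X)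
  have h1 : ExtVanish R X Y (n+1) ↔ ∀ f : P.complex.X (n+1) ⟶ ModuleCat.of R Y,
      P.complex.d (n+2) (n+1) ≫ f = 0 → ∃ g : P.complex.X n ⟶ ModuleCat.of R Y,
        P.complex.d (n+1) n ≫ g = f := by
    unfold ExtVanish
    rw [← ModuleCat.isZero_iff_subsingleton,
      (P.isoExt (R := R) (n+1) (ModuleCat.of R Y)).isZero_iff,
      ← HomologicalComplex.exactAt_iff_isZero_homology,
      HomologicalComplex.exactAt_iff' _ n (n+1) (n+2) (by simp) (by simp),
      ShortComplex.moduleCat_exact_iff]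
    rfl
  rw [h1]
  constructor
  · intro h e
    obtain ⟨f, hf, rfl⟩ := P.extMk_surjective e (n+2) rfl
    rw [P.extMk_eq_zero_iff _ _ _ _ n rfl]
    exact h f hf
  · intro h f hf
    rw [← P.extMk_eq_zero_iff f (n+2) rfl hf n rfl]
    exact h _

section LES

variable {A B C X Y : Type u} [AddCommGroup A] [Module R A] [AddCommGroup B] [Module R B]
    [AddCommGroup C] [Module R C] [AddCommGroup X] [Module R X] [AddCommGroup Y] [Module R Y]
    {f : A →ₗ[R] B} {g : B →ₗ[R] C}

lemma IsShortExact.zero (h : IsShortExact R f g) : g.comp f = 0 := h.2.2.linearMap_comp_eq_zero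

abbrev sc (h : IsShortExact R f g) : ShortComplex (ModuleCat.{u} R) :=
  ShortComplex.mk (ModuleCat.ofHom f) (ModuleCat.ofHom g)
    (by rw [← ModuleCat.ofHom_comp, IsShortExact.zero h]; rfl)

lemma se (h : IsShortExact R f g) : (sc h).ShortExact where
  exact := by
    rw [ShortComplex.moduleCat_exact_iff]
    exact fun x hx => (h.2.2 x).1 hx
  mono_f := (ModuleCat.mono_iff_injective _).2 h.1
  epi_g := (ModuleCat.epi_iff_surjective _).2 h.2.1

lemma ev_C {n : ℕ} (h : IsShortExact R f g) (hA : EV R A Y n) (hB : EV R B Y (n+1)) :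
    EV R C Y (n+1) := by
  intro e
  obtain ⟨x, rfl⟩ := Ext.contravariant_sequence_exact₃ (se h) _ e (hB _) (add_comm 1 n)
  rw [hA x, Ext.comp_zero]

lemma ev_B {n : ℕ} (h : IsShortExact R f g) (hA : EV R A Y n) (hC : EV R C Y n) :
    EV R B Y n := by
  intro e
  obtain ⟨x, rfl⟩ := Ext.contravariant_sequence_exact₂ (se h) _ e (hA _)
  rw [hC x, Ext.comp_zero]

lemma ev_A {n : ℕ} (h : IsShortExact R f g) (hB : EV R B Y n) (hC : EV R C Y (n+1)) :
    EV R A Y n := by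
  intro e
  obtain ⟨x, rfl⟩ := Ext.contravariant_sequence_exact₁ (se h) _ e (add_comm 1 n) (hC _)
  rw [hB x, Ext.comp_zero]

lemma ev_extend (h : IsShortExact R f g) (hC : EV R C Y 1) (φ : A →ₗ[R] Y) :
    ∃ ψ : B →ₗ[R] Y, ψ.comp f = φ := by
  obtain ⟨x, hx⟩ := Ext.contravariant_sequence_exact₁ (se h) (ModuleCat.of R Y)
    (Ext.mk₀ (ModuleCat.ofHom φ)) (add_comm 1 0) (hC _)
  obtain ⟨ψ, rfl⟩ := Ext.homEquiv₀.symm.surjective x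
  refine ⟨ψ.hom, ?_⟩
  simp only [Ext.homEquiv₀_symm_apply, Ext.mk₀_comp_mk₀] at hx
  have := (Ext.mk₀_bijective _ _).1 hx
  exact congrArg ModuleCat.Hom.hom this

lemma ev_one (h : IsShortExact R f g) (hB : EV R B Y 1)
    (hφ : ∀ φ : A →ₗ[R] Y, ∃ ψ : B →ₗ[R] Y, ψ.comp f = φ) : EV R C Y 1 := by
  intro e
  obtain ⟨x, rfl⟩ := Ext.contravariant_sequence_exact₃ (se h) _ e (hB _) (add_comm 1 0)
  obtain ⟨φ, rfl⟩ := Ext.homEquiv₀.symm.surjective x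
  obtain ⟨ψ, hψ⟩ := hφ φ.hom
  have : φ = ModuleCat.ofHom f ≫ ModuleCat.ofHom ψ := by
    ext1; exact hψ.symm
  rw [this]
  simp only [Ext.homEquiv₀_symm_apply]
  rw [← Ext.mk₀_comp_mk₀]
  exact (se h).extClass_comp_assoc _

lemma ev_A' {n : ℕ} (h : IsShortExact R f g) (hB : EV R X B (n+1)) (hC : EV R X C n) :
    EV R X A (n+1) := by
  intro e
  obtain ⟨x, rfl⟩ := Ext.covariant_sequence_exact₁ _ (se h) e (hB _) rfl
  rw [hC x, Ext.zero_comp]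

lemma ev_B' {n : ℕ} (h : IsShortExact R f g) (hA : EV R X A n) (hC : EV R X C n) :
    EV R X B n := by
  intro e
  obtain ⟨x, rfl⟩ := Ext.covariant_sequence_exact₂ _ (se h) e (hC _)
  rw [hA x, Ext.zero_comp]

lemma ev_proj [Module.Projective R X] (n : ℕ) : EV R X Y (n+1) := by
  have : Projective (ModuleCat.of R X) := by
    rw [← IsProjective.iff_projective]; infer_instance
  intro e
  exact e.eq_zero_of_projective

lemma ev_inj [hY : Module.Injective R Y] (n : ℕ) : EV R X Y (n+1) := by
  have : Injective (ModuleCat.of R Y) := by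
    exact Module.injective_object_of_injective_module R Y
  intro e
  exact e.eq_zero_of_injective

lemma ev_congr_left (e : A ≃ₗ[R] B) {n : ℕ} (h : EV R A Y n) : EV R B Y n := by
  intro x
  have : x = (Ext.mk₀ (e.toModuleIso.inv)).comp ((Ext.mk₀ e.toModuleIso.hom).comp x (zero_add n))
      (zero_add n) := by
    rw [Ext.mk₀_comp_mk₀_assoc, Iso.inv_hom_id, Ext.mk₀_id_comp]
  rw [this, h ((Ext.mk₀ e.toModuleIso.hom).comp x (zero_add n)), Ext.comp_zero]

lemma ev_congr_right (e : A ≃ₗ[R] B) {n : ℕ} (h : EV R X A n) : EV R X B n := by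
  intro x
  have : x = (x.comp (Ext.mk₀ (e.toModuleIso.inv)) (add_zero n)).comp
      (Ext.mk₀ e.toModuleIso.hom) (add_zero n) := by
    rw [Ext.comp_assoc_of_third_deg_zero, Ext.mk₀_comp_mk₀, Iso.inv_hom_id, Ext.comp_mk₀_id]
  rw [this, h (x.comp (Ext.mk₀ (e.toModuleIso.inv)) (add_zero n)), Ext.zero_comp]

end LES

section TR

variable {A B C X Y : Type u} [AddCommGroup A] [Module R A] [AddCommGroup B] [Module R B]
    [AddCommGroup C] [Module R C] [AddCommGroup X] [Module R X] [AddCommGroup Y] [Module R Y]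
    {f : A →ₗ[R] B} {g : B →ₗ[R] C}

lemma tr_iff : IsTotallyReflexive R X ↔ Module.Finite R X ∧ Module.IsReflexive R X ∧
    (∀ i, EV R X R (i+1)) ∧ ∀ i, EV R (Module.Dual R X) R (i+1) := by
  unfold IsTotallyReflexive
  refine and_congr Iff.rfl (and_congr ⟨fun h => ⟨h⟩, fun h => h.1⟩ (and_congr ?_ ?_))
  · constructor
    · exact fun h i => (extVanish_iff _ _ _).1 (h (i+1) (by omega))
    · rintro h (_ | i) hi
      · omega
      · exact (extVanish_iff _ _ _).2 (h i)
  · constructor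
    · exact fun h i => (extVanish_iff _ _ _).1 (h (i+1) (by omega))
    · rintro h (_ | i) hi
      · omega
      · exact (extVanish_iff _ _ _).2 (h i)

lemma dual_se (h : IsShortExact R f g) (hC : EV R C R 1) :
    IsShortExact R g.dualMap f.dualMap := by
  refine ⟨LinearMap.dualMap_injective_of_surjective h.2.1, fun φ => ev_extend h hC φ, ?_⟩
  intro φ
  constructor
  · intro hφ
    have hk : LinearMap.ker g ≤ LinearMap.ker φ := by
      intro b hb
      obtain ⟨a, rfl⟩ := (h.2.2 b).1 hb
      exact LinearMap.congr_fun hφ a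
    refine ⟨((LinearMap.ker g).liftQ φ hk).comp
      (g.quotKerEquivOfSurjective h.2.1).symm.toLinearMap, ?_⟩
    ext b
    have : (g.quotKerEquivOfSurjective h.2.1).symm (g b) = (LinearMap.ker g).mkQ b := by
      rw [LinearEquiv.symm_apply_eq]; rfl
    simp [LinearMap.dualMap_apply, this]
  · rintro ⟨ψ, rfl⟩
    ext a
    simp [LinearMap.dualMap_apply, (h.2.2 (f a)).2 ⟨a, rfl⟩]

lemma tr_proj [Module.Finite R X] [Module.Projective R X] : IsTotallyReflexive R X :=
  tr_iff.2 ⟨inferInstance, inferInstance, fun i => ev_proj i, fun i => ev_proj i⟩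

lemma dual_finite [IsNoetherianRing R] [Module.Finite R X] :
    Module.Finite R (Module.Dual R X) := by
  obtain ⟨n, p, hp⟩ := Module.Finite.exists_fin' R X
  exact Module.Finite.of_injective p.dualMap (LinearMap.dualMap_injective_of_surjective hp)

lemma ker_se (hg : Function.Surjective g) : IsShortExact R (LinearMap.ker g).subtype g :=
  ⟨Subtype.val_injective, hg, fun b => ⟨fun h => ⟨⟨b, h⟩, rfl⟩, by rintro ⟨a, rfl⟩; exact a.2⟩⟩

lemma cosyzygy [IsNoetherianRing R] (hX : IsTotallyReflexive R X) :
    ∃ (F X' : ModuleCat.{u} R) (f : X →ₗ[R] F) (g : F →ₗ[R] X'),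
      Module.Finite R F ∧ Module.Projective R F ∧ IsShortExact R f g ∧
      IsTotallyReflexive R X' := by
  obtain ⟨hfin, hrefl, hE, hE'⟩ := tr_iff.1 hX
  have := dual_finite (R := R) (X := X)
  obtain ⟨n, p, hp⟩ := Module.Finite.exists_fin' R (Module.Dual R X)
  have s0 := ker_se hp
  have d0 := dual_se s0 (hE' 0)
  let f : X →ₗ[R] Module.Dual R (Fin n → R) := p.dualMap.comp (Module.Dual.eval R X)
  let g := (LinearMap.ker p).subtype.dualMap
  have hf : ∀ x v, f x v = p v x := fun x v => rfl
  have s1 : IsShortExact R f g := by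
    refine ⟨d0.1.comp (Module.bijective_dual_eval R X).1, d0.2.1, ?_⟩
    intro φ
    refine (d0.2.2 φ).trans ⟨?_, ?_⟩
    · rintro ⟨ψ, rfl⟩
      obtain ⟨x, rfl⟩ := (Module.bijective_dual_eval R X).2 ψ
      exact ⟨x, rfl⟩
    · rintro ⟨x, rfl⟩
      exact ⟨Module.Dual.eval R X x, rfl⟩
  have e1 : EV R (Module.Dual R (LinearMap.ker p)) R 1 := by
    refine ev_one s1 (ev_proj 0) ?_
    intro φ
    obtain ⟨v, rfl⟩ := hp φ
    exact ⟨Module.Dual.eval R _ v, by ext x; exact hf x v⟩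
  have d1 := dual_se s1 e1
  have hY : Module.IsReflexive R (LinearMap.ker p) := by
    have key : ∀ y, g.dualMap (Module.Dual.eval R _ y) = Module.Dual.eval R _ y.1 :=
      fun y => rfl
    refine ⟨⟨?_, ?_⟩⟩
    · intro y y' h
      have := congrArg g.dualMap h
      rw [key, key] at this
      exact Subtype.ext ((Module.bijective_dual_eval R (Fin n → R)).1 this)
    · intro z
      obtain ⟨v, hv⟩ := (Module.bijective_dual_eval R (Fin n → R)).2 (g.dualMap z)
      have hz := (d1.2.2 (g.dualMap z)).2 ⟨z, rfl⟩
      rw [← hv] at hz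
      have hpv : p v = 0 := by
        ext x
        exact LinearMap.congr_fun hz x
      refine ⟨⟨v, hpv⟩, d1.1 ?_⟩
      rw [key]; exact hv
  refine ⟨ModuleCat.of R (Module.Dual R (Fin n → R)),
    ModuleCat.of R (Module.Dual R (LinearMap.ker p)), f, g,
    inferInstanceAs (Module.Finite R (Module.Dual R (Fin n → R))),
    inferInstanceAs (Module.Projective R (Module.Dual R (Fin n → R))), s1, ?_⟩
  refine tr_iff.2 ⟨Module.Finite.of_surjective g s1.2.1,
    inferInstanceAs (Module.IsReflexive R (Module.Dual R (LinearMap.ker p))), ?_, ?_⟩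
  · rintro (_ | i)
    · exact e1
    · exact ev_C s1 (hE i) (ev_proj _)
  · intro i
    exact ev_congr_left (Module.evalEquiv R (LinearMap.ker p)) (ev_A s0 (ev_proj i) (hE' (i+1)))

lemma tr_ext [IsNoetherianRing R] (h : IsShortExact R f g) (hA : IsTotallyReflexive R A)
    (hC : IsTotallyReflexive R C) : IsTotallyReflexive R B := by
  obtain ⟨hfin, hrefl, hE, hE'⟩ := tr_iff.1 hA
  obtain ⟨hfin1, hrefl1, hE1, hE1'⟩ := tr_iff.1 hC
  have d1 := dual_se h (hE1 0)
  have d2 := dual_se d1 (hE' 0)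
  refine tr_iff.2 ⟨?_, ⟨?_, ?_⟩, fun i => ev_B h (hE i) (hE1 i), fun i => ev_B d1 (hE1' i) (hE' i)⟩
  · have := isNoetherian_of_range_eq_ker f g (LinearMap.exact_iff.1 h.2.2).symm
    infer_instance
  · rw [injective_iff_map_eq_zero]
    intro z hz
    have h1 : Module.Dual.eval R C (g z) = 0 := by
      change g.dualMap.dualMap (Module.Dual.eval R B z) = 0
      rw [hz, map_zero]
    have h2 : g z = 0 := (Module.bijective_dual_eval R C).1 (by rw [h1, map_zero])
    obtain ⟨x, rfl⟩ := (h.2.2 z).1 h2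
    have h3 : Module.Dual.eval R A x = 0 := by
      apply d2.1
      rw [map_zero]; exact hz
    have h4 : x = 0 := (Module.bijective_dual_eval R A).1 (by rw [h3, map_zero])
    rw [h4, map_zero]
  · intro w
    obtain ⟨c, hc⟩ := (Module.bijective_dual_eval R C).2 (g.dualMap.dualMap w)
    obtain ⟨z, rfl⟩ := h.2.1 c
    have h1 : g.dualMap.dualMap (w - Module.Dual.eval R B z) = 0 := by
      rw [map_sub, ← hc]
      exact sub_self _
    obtain ⟨a, ha⟩ := (d2.2.2 _).1 h1
    obtain ⟨x, rfl⟩ := (Module.bijective_dual_eval R A).2 a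
    refine ⟨f x + z, ?_⟩
    rw [map_add]
    have : Module.Dual.eval R B (f x) = w - Module.Dual.eval R B z := ha
    rw [this, sub_add_cancel]

/-- pushouts of short exact sequences -/
lemma pushout_se {K P D M : Type u} [AddCommGroup K] [Module R K] [AddCommGroup P] [Module R P]
    [AddCommGroup D] [Module R D] [AddCommGroup M] [Module R M]
    {k : K →ₗ[R] X} {q : X →ₗ[R] M} {a : K →ₗ[R] P} {b : P →ₗ[R] D}
    (h1 : IsShortExact R k q) (h2 : IsShortExact R a b) :
    ∃ (Z : ModuleCat.{u} R) (i : X →ₗ[R] Z) (s : Z →ₗ[R] D) (j : P →ₗ[R] Z) (t : Z →ₗ[R] M),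
      IsShortExact R i s ∧ IsShortExact R j t := by
  let N := LinearMap.range (k.prod (-a))
  have hs : N ≤ LinearMap.ker (b.comp (LinearMap.snd R X P)) := by
    rintro _ ⟨x, rfl⟩
    simp [(h2.2.2 (a x)).2 ⟨x, rfl⟩]
  have ht : N ≤ LinearMap.ker (q.comp (LinearMap.fst R X P)) := by
    rintro _ ⟨x, rfl⟩
    simp [(h1.2.2 (k x)).2 ⟨x, rfl⟩]
  refine ⟨ModuleCat.of R ((X × P) ⧸ N), N.mkQ.comp (LinearMap.inl R X P), N.liftQ _ hs,
    N.mkQ.comp (LinearMap.inr R X P), N.liftQ _ ht, ⟨?_, ?_, ?_⟩, ⟨?_, ?_, ?_⟩⟩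
  · rw [injective_iff_map_eq_zero]
    intro x hx
    have hx : (x, (0 : P)) ∈ N := (Submodule.Quotient.mk_eq_zero N).1 hx
    obtain ⟨y, hy⟩ := hx
    have h3 : k y = x := congrArg Prod.fst hy
    have h4 : - a y = 0 := congrArg Prod.snd hy
    have h5 : y = 0 := h2.1 (by rw [map_zero]; exact neg_eq_zero.1 h4)
    rw [← h3, h5, map_zero]
  · intro d
    obtain ⟨p, rfl⟩ := h2.2.1 d
    exact ⟨N.mkQ (0, p), rfl⟩
  · intro z
    obtain ⟨⟨x, p⟩, rfl⟩ := N.mkQ_surjective z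
    constructor
    · intro hz
      have hz : b p = 0 := hz
      obtain ⟨y, rfl⟩ := (h2.2.2 p).1 hz
      refine ⟨x + k y, ?_⟩
      refine (Submodule.Quotient.eq N).2 ⟨y, ?_⟩
      simp
    · rintro ⟨x', hx'⟩
      rw [← hx']
      exact map_zero b
  · rw [injective_iff_map_eq_zero]
    intro x hx
    have hx : ((0 : X), x) ∈ N := (Submodule.Quotient.mk_eq_zero N).1 hx
    obtain ⟨y, hy⟩ := hx
    have h3 : k y = 0 := congrArg Prod.fst hy
    have h4 : - a y = x := congrArg Prod.snd hy
    have h5 : y = 0 := h1.1 (by rw [map_zero]; exact h3)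
    rw [← h4, h5, map_zero, neg_zero]
  · intro d
    obtain ⟨p, rfl⟩ := h1.2.1 d
    exact ⟨N.mkQ (p, 0), rfl⟩
  · intro z
    obtain ⟨⟨x, p⟩, rfl⟩ := N.mkQ_surjective z
    constructor
    · intro hz
      have hz : q x = 0 := hz
      obtain ⟨y, rfl⟩ := (h1.2.2 x).1 hz
      refine ⟨p + a y, ?_⟩
      refine (Submodule.Quotient.eq N).2 ⟨-y, ?_⟩
      simp
    · rintro ⟨x', hx'⟩
      rw [← hx']
      exact map_zero q

/-- the third isomorphism: if `P → Z → M` and `Z → F → D` are exact, so are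
`P → F → Q` and `M → Q → D`. -/
lemma third_se {P Z M F D : Type u} [AddCommGroup Z] [Module R Z] [AddCommGroup P] [Module R P]
    [AddCommGroup D] [Module R D] [AddCommGroup M] [Module R M] [AddCommGroup F] [Module R F]
    {j : P →ₗ[R] Z} {t : Z →ₗ[R] M} {c : Z →ₗ[R] F} {d : F →ₗ[R] D}
    (h1 : IsShortExact R j t) (h2 : IsShortExact R c d) :
    ∃ (Q : ModuleCat.{u} R) (w : F →ₗ[R] Q) (a : M →ₗ[R] Q) (b : Q →ₗ[R] D),
      IsShortExact R (c.comp j) w ∧ IsShortExact R a b := by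
  let N := LinearMap.range (c.comp j)
  have hk : LinearMap.ker t ≤ LinearMap.ker (N.mkQ.comp c) := by
    intro z hz
    obtain ⟨p, rfl⟩ := (h1.2.2 z).1 hz
    exact (Submodule.Quotient.mk_eq_zero N).2 ⟨p, rfl⟩
  have hd : N ≤ LinearMap.ker d := by
    rintro _ ⟨p, rfl⟩
    exact (h2.2.2 _).2 ⟨j p, rfl⟩
  let a : M →ₗ[R] F ⧸ N := ((LinearMap.ker t).liftQ _ hk).comp
      (t.quotKerEquivOfSurjective h1.2.1).symm.toLinearMap
  have ha : ∀ z, a (t z) = N.mkQ (c z) := by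
    intro z
    have : (t.quotKerEquivOfSurjective h1.2.1).symm (t z) = (LinearMap.ker t).mkQ z := by
      rw [LinearEquiv.symm_apply_eq]; rfl
    simp [a, this]
  refine ⟨ModuleCat.of R (F ⧸ N), N.mkQ, a, N.liftQ d hd,
    ⟨h2.1.comp h1.1, N.mkQ_surjective, ?_⟩, ?_, ?_, ?_⟩
  · intro x
    exact Submodule.Quotient.mk_eq_zero N
  · rw [injective_iff_map_eq_zero]
    intro m hm
    obtain ⟨z, rfl⟩ := h1.2.1 m
    rw [ha] at hm
    obtain ⟨p, hp⟩ := (Submodule.Quotient.mk_eq_zero N).1 hm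
    have := h2.1 hp
    rw [← this]
    exact (h1.2.2 _).2 ⟨p, rfl⟩
  · intro x
    obtain ⟨y, rfl⟩ := h2.2.1 x
    exact ⟨N.mkQ y, rfl⟩
  · intro z
    obtain ⟨y, rfl⟩ := N.mkQ_surjective z
    constructor
    · intro hz
      obtain ⟨z, rfl⟩ := (h2.2.2 y).1 hz
      exact ⟨t z, ha z⟩
    · rintro ⟨m, hm⟩
      obtain ⟨z, rfl⟩ := h1.2.1 m
      rw [← hm, ha]
      exact (h2.2.2 _).2 ⟨z, rfl⟩

end TR

lemma hull [IsNoetherianRing R] (n : ℕ) : ∀ M : ModuleCat.{u} R, GdimLE R n M →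
    ∃ (P X : ModuleCat.{u} R) (f : M →ₗ[R] P) (g : P →ₗ[R] X) (m : ℕ),
      HasProjectiveDimensionLT P m ∧ IsShortExact R f g ∧ IsTotallyReflexive R X := by
  induction n with
  | zero =>
    intro M hM
    obtain ⟨F, X', f, g, -, hF, hs, hX'⟩ := cosyzygy (R := R) (X := M) hM
    have : Projective F := (IsProjective.iff_projective F).1 hF
    exact ⟨F, X', f, g, 1, inferInstance, hs, hX'⟩
  | succ n ih =>
    rintro M ⟨X, K, k, q, hX, h1, hK⟩
    obtain ⟨P, D, a, b, m, hP, h2, hD⟩ := ih K hK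
    obtain ⟨Z, i, s, j, t, h3, h4⟩ := pushout_se h1 h2
    have hZ := tr_ext h3 hX hD
    obtain ⟨F, X', c, d, -, hF, h5, hX'⟩ := cosyzygy hZ
    obtain ⟨Q, w, u, v, h6, h7⟩ := third_se h4 h5
    have : Projective F := (IsProjective.iff_projective F).1 hF
    refine ⟨Q, X', u, v, m+1, ?_, h7, hX'⟩
    have h8 : HasProjectiveDimensionLT F (m+1) := inferInstance
    exact (se h6).hasProjectiveDimensionLT_X₃ m hP h8

def Good (N : Type u) [AddCommGroup N] [Module R N] : Prop :=
  ∀ X : ModuleCat.{u} R, IsTotallyReflexive R X → ∀ i, EV R X N (i+1)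

section Good

variable {A B C N X : Type u} [AddCommGroup A] [Module R A] [AddCommGroup B] [Module R B]
    [AddCommGroup C] [Module R C] [AddCommGroup N] [Module R N] [AddCommGroup X] [Module R X]
    {f : A →ₗ[R] B} {g : B →ₗ[R] C}

lemma good_of_high [IsNoetherianRing R] (d : ℕ)
    (h : ∀ X : ModuleCat.{u} R, IsTotallyReflexive R X → ∀ i, EV R X N (d+i+1)) :
    Good (R := R) N := by
  induction d with
  | zero => exact fun X hX i => by simpa using h X hX i
  | succ d ih =>
    apply ih
    intro X hX i
    obtain ⟨F, X', f, g, -, hF, hs, hX'⟩ := cosyzygy (R := R) (X := X) hX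
    have := h X' hX' i
    rw [show d + 1 + i + 1 = (d + i + 1) + 1 by ring] at this
    exact ev_A hs (ev_proj _) this

lemma ev_of_injdim (d : ℕ) : ∀ M : ModuleCat.{u} R, InjdimLE R d M → ∀ i, EV R X M (d+i+1) := by
  induction d with
  | zero =>
    intro M hM i
    have : Module.Injective R M := hM
    exact ev_inj _
  | succ d ih =>
    rintro M ⟨I, C, f, g, hI, hs, hC⟩ i
    have := ih C hC i
    rw [show d + 1 + i + 1 = (d + i + 1) + 1 by ring]
    exact ev_A' hs (ev_inj _) this

lemma ev_pi {k : ℕ} (h : EV R X N k) (n : ℕ) : EV R X (Fin n → N) k := by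
  induction n with
  | zero =>
    intro e
    rw [← e.comp_mk₀_id]
    have : 𝟙 (ModuleCat.of R (Fin 0 → N)) = 0 := by
      exact ModuleCat.hom_ext (LinearMap.ext fun x => funext fun i => i.elim0)
    rw [this, Ext.mk₀_zero, Ext.comp_zero]
  | succ n ih =>
    have hs : IsShortExact R (LinearMap.single R (fun _ : Fin (n+1) => N) 0)
        (LinearMap.funLeft R N (Fin.succ : Fin n → Fin (n+1))) := by
      refine ⟨?_, ?_, ?_⟩
      · intro x y hxy
        simpa using congrFun hxy 0
      · intro v
        exact ⟨Fin.cons 0 v, by ext i; simp [LinearMap.funLeft]⟩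
      · intro v
        constructor
        · intro hv
          refine ⟨v 0, ?_⟩
          ext i
          refine Fin.cases ?_ (fun i => ?_) i
          · simp
          · have := congrFun hv i
            simp only [LinearMap.funLeft_apply, Pi.zero_apply] at this
            simp [this]
        · rintro ⟨x, rfl⟩
          ext i
          simp [LinearMap.funLeft_apply]
    exact ev_B' hs h ih

lemma good_free [Module.Free R N] [Module.Finite R N] : Good (R := R) N := by
  intro X hX i
  obtain ⟨n, ⟨e⟩⟩ : ∃ n, Nonempty (N ≃ₗ[R] (Fin n → R)) := by
    exact ⟨_, ⟨(Module.Free.chooseBasis R N).equivFun.trans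
      (LinearEquiv.funCongrLeft R R (Fintype.equivFin _).symm)⟩⟩
  exact ev_congr_right e.symm (ev_pi ((tr_iff.1 hX).2.2.1 i) n)

lemma good_syz [IsNoetherianRing R] (h : IsShortExact R f g) [Module.Free R B] [Module.Finite R B]
    (hC : Good (R := R) C) : Good (R := R) A := by
  apply good_of_high 1
  intro X hX i
  rw [show 1 + i + 1 = (i + 1) + 1 by ring]
  exact ev_A' h (good_free X hX (i+1)) (hC X hX i)

end Good

lemma good_isSyzygy [IsNoetherianRing R] (n : ℕ) : ∀ S K : ModuleCat.{u} R, IsSyzygy R n S K →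
    Good (R := R) K → Good (R := R) S := by
  induction n with
  | zero =>
    rintro S K ⟨e⟩ hK X hX i
    exact ev_congr_right e.symm (hK X hX i)
  | succ n ih =>
    rintro S K ⟨W, F, f, g, h1, h2, h3, h4⟩ hK
    exact ih S W h4 (good_syz h3 hK)

lemma good_step [IsNoetherianRing R] {K L : ModuleCat.{u} R} {a b n : ℕ}
    (h : ReducingStep R K L a b n) (hK : Good (R := R) K) : Good (R := R) L := by
  obtain ⟨W, f, g, hW, hs⟩ := h
  have hW := good_isSyzygy n W K hW hK
  exact fun X hX i => ev_B' hs (ev_pi (hK X hX i) a) (ev_pi (hW X hX i) b)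

lemma pdimLE_of [IsNoetherianRing R] (n : ℕ) : ∀ K : ModuleCat.{u} R, Module.Finite R K →
    HasProjectiveDimensionLT K (n+1) → PdimLE R n K := by
  induction n with
  | zero =>
    intro K hK h
    exact ⟨hK, (IsProjective.iff_projective K).2 (projective_iff_hasProjectiveDimensionLT_one.2 h)⟩
  | succ n ih =>
    intro K hK h
    obtain ⟨m, p, hp⟩ := Module.Finite.exists_fin' R K
    have s := ker_se hp
    refine ⟨ModuleCat.of R (Fin m → R), ModuleCat.of R (LinearMap.ker p),
      (LinearMap.ker p).subtype, p, inferInstanceAs (Module.Finite R (Fin m → R)),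
      inferInstanceAs (Module.Projective R (Fin m → R)), s,
      ih _ (inferInstanceAs (Module.Finite R (LinearMap.ker p))) ?_⟩
    have : Projective (ModuleCat.of R (Fin m → R)) :=
      (IsProjective.iff_projective (Fin m → R)).1 inferInstance
    exact ((se s).hasProjectiveDimensionLT_X₃_iff n this).1 h

lemma pdim_of_good [IsNoetherianRing R] (K : ModuleCat.{u} R) (hfin : Module.Finite R K)
    (hK : Good (R := R) K) (hG : ∃ m, GdimLE R m K) : ∃ m, PdimLE R m K := by
  obtain ⟨n, hn⟩ := hG
  obtain ⟨P, X, f, g, m, hP, hs, hX⟩ := hull n K hn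
  obtain ⟨r, hr⟩ := ev_extend hs (hK X hX 0) LinearMap.id
  let ρ : Retract K P :=
    { i := ModuleCat.ofHom f
      r := ModuleCat.ofHom r
      retract := by
        ext x
        exact LinearMap.congr_fun hr x }
  have h1 := ρ.hasProjectiveDimensionLT m
  exact ⟨m, pdimLE_of m K hfin (hasProjectiveDimensionLT_of_ge K m (m+1) (by omega))⟩

lemma gdim_of_pdim (n : ℕ) : ∀ K : ModuleCat.{u} R, PdimLE R n K → GdimLE R n K := by
  induction n with
  | zero =>
    rintro K ⟨h1, h2⟩
    exact tr_proj
  | succ n ih =>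
    rintro K ⟨X, L, f, g, h1, h2, h3, h4⟩
    exact ⟨X, L, f, g, tr_proj, h3, ih L h4⟩

end RedInv

theorem stmt2 (R : Type u) [CommRing R] [IsNoetherianRing R] [IsLocalRing R]
    (M : Type u) [AddCommGroup M] [Module R M] [Module.Finite R M] [Nontrivial M]
    (hinj : ∃ n : ℕ, InjdimLE R n (ModuleCat.of R M)) :
    rGdim R (ModuleCat.of R M) = rPdim R (ModuleCat.of R M) := by
  unfold rGdim rPdim ReducingDim
  congr 1
  ext n
  refine exists_congr fun r => and_congr Iff.rfl ⟨?_, ?_⟩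
  · rintro ⟨K, a, b, n, h0, hfin, hstep, hP⟩
    refine ⟨K, a, b, n, h0, hfin, hstep, RedInv.pdim_of_good _ (hfin _) ?_ hP⟩
    have hg : ∀ i, RedInv.Good (R := R) (K i) := by
      intro i
      induction i using Fin.induction with
      | zero =>
        rw [h0]
        obtain ⟨d, hd⟩ := hinj
        exact RedInv.good_of_high d fun X _ i => RedInv.ev_of_injdim d _ hd i
      | succ i ih => exact RedInv.good_step (hstep i).2.2.2 ih
    exact hg _
  · rintro ⟨K, a, b, n, h0, hfin, hstep, m, hP⟩
    exact ⟨K, a, b, n, h0, hfin, hstep, m, RedInv.gdim_of_pdim m _ hP⟩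
end
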